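/- Fix a discrete memoryless MAC with finite alphabets, ε∈(0,1), and a sum-capacity-achieving product pmf p_{X₁}p_{X₂}∈𝒫* with V₂>0 and I(X₁;Y|X₂)+I(X₂;Y|X₁) > I(X₁,X₂;Y). Then V₁+V₂ = Var(i(X₁,X₂;Y)), and there is a constant c such that for all n ≥ 2: R_sum(n,ε,1) ≥ C_sum + √((V₁+V₂)/n)·Φ^{-1}(ε) − c·(log n)/n, where Φ^{-1} is the inverse of the standard Gaussian CDF. -/

import Mathlib

/-!
The bound is proved by random coding with a threshold decoder and a Berry–Esseen estimate.

*Coding.* With `K = 1` the facilitator is silent. Draw both codebooks i.i.d. from `p₁` and `p₂` and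
decode to a message pair whose three information densities `i(x₁;y|x₂)`, `i(x₂;y|x₁)`, `i(x₁,x₂;y)`
all exceed their thresholds. A change of measure bounds the probability that a wrong pair passes by
the number of wrong pairs over the threshold (`oneshot_random_coding`). With thresholds a factor
`√n` above the message-set sizes these terms contribute `3 / √n`, and the remaining error is the
probability that one of the three i.i.d. sums of densities is small (`Rsum_ge_of_bound`).

*Probability.* The sum of `i(X₁,X₂;Y)` has mean `n I` and variance `n (V₁ + V₂)`; its lower tail is
at most `Φ(x) + B / √n` (`berry_esseen_upper`). Only this one-sided inequality is needed, and it
follows from Stein's method: for the Stein solution `f_z`, increments are bounded from below after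
shrinking the indicator `1{w ≤ z}` to `1{w ≤ z - k}`, where `k = O(1/√n)` bounds one summand
(`steinSol_increment`, `stein_one_sided`), and the shift costs `O(1/√n)` because `Φ` is Lipschitz.
Since `I(X₁;Y|X₂) + I(X₂;Y|X₁) > I(X₁,X₂;Y)`, the total rate can be split so that both conditional
densities have thresholds linearly below their means, and Chebyshev's inequality makes these events
`O(1/√n)` (`iidE_far_below_mean`).

*Choice of rates.* All `O(1/√n)` terms are absorbed by evaluating `Φ` at `Φ⁻¹(ε) - A / √n`, since the
Gaussian density is bounded below near `Φ⁻¹(ε)`. This shift costs `O(1/n)` in rate and the thresholds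
cost `(log n) / (2n)`. For the finitely many small `n` the claim is made trivial by a large `c`, as
`Rsum` is nonnegative.
-/

open scoped BigOperators Classical

noncomputable section

/-- A pmf on a finite type. -/
def IsPMF {α : Type*} [Fintype α] (p : α → ℝ) : Prop :=
  (∀ a, 0 ≤ p a) ∧ ∑ a, p a = 1

variable {X1 X2 Y : Type*} [Fintype X1] [Fintype X2] [Fintype Y]

/-- A discrete memoryless MAC: a conditional pmf `W(y|x₁,x₂)` on finite alphabets. -/
def IsChannel (W : X1 → X2 → Y → ℝ) : Prop :=
  (∀ x1 x2 y, 0 ≤ W x1 x2 y) ∧ ∀ x1 x2, ∑ y, W x1 x2 y = 1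

/-- The output marginal `p_Y` induced by a product input pmf `p₁·p₂`. -/
def outDist (W : X1 → X2 → Y → ℝ) (p1 : X1 → ℝ) (p2 : X2 → ℝ) (y : Y) : ℝ :=
  ∑ x1, ∑ x2, p1 x1 * p2 x2 * W x1 x2 y

/-- The joint information density `i(x₁,x₂;y) = log₂(W(y|x₁,x₂)/p_Y(y))`. -/
def iDens (W : X1 → X2 → Y → ℝ) (p1 : X1 → ℝ) (p2 : X2 → ℝ)
    (x1 : X1) (x2 : X2) (y : Y) : ℝ :=
  Real.logb 2 (W x1 x2 y / outDist W p1 p2 y)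

/-- The conditional output marginal `p_{Y|X₂}(y|x₂)`. -/
def condOut2 (W : X1 → X2 → Y → ℝ) (p1 : X1 → ℝ) (x2 : X2) (y : Y) : ℝ :=
  ∑ x1, p1 x1 * W x1 x2 y

/-- The conditional output marginal `p_{Y|X₁}(y|x₁)`. -/
def condOut1 (W : X1 → X2 → Y → ℝ) (p2 : X2 → ℝ) (x1 : X1) (y : Y) : ℝ :=
  ∑ x2, p2 x2 * W x1 x2 y

/-- The conditional information density `i(x₁;y|x₂)`. -/
def iDensC1 (W : X1 → X2 → Y → ℝ) (p1 : X1 → ℝ) (x1 : X1) (x2 : X2) (y : Y) : ℝ :=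
  Real.logb 2 (W x1 x2 y / condOut2 W p1 x2 y)

/-- The conditional information density `i(x₂;y|x₁)`. -/
def iDensC2 (W : X1 → X2 → Y → ℝ) (p2 : X2 → ℝ) (x1 : X1) (x2 : X2) (y : Y) : ℝ :=
  Real.logb 2 (W x1 x2 y / condOut1 W p2 x1 y)

/-- `i(x₁,x₂) = E[i(x₁,x₂;Y) | X₁=x₁, X₂=x₂] = D(W(·|x₁,x₂) ‖ p_Y)`. -/
def iBar (W : X1 → X2 → Y → ℝ) (p1 : X1 → ℝ) (p2 : X2 → ℝ) (x1 : X1) (x2 : X2) : ℝ :=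
  ∑ y, W x1 x2 y * iDens W p1 p2 x1 x2 y

/-- The mutual information `I(X₁,X₂;Y)` under the product input pmf `p₁·p₂` (log base 2). -/
def Isum (W : X1 → X2 → Y → ℝ) (p1 : X1 → ℝ) (p2 : X2 → ℝ) : ℝ :=
  ∑ x1, ∑ x2, p1 x1 * p2 x2 * iBar W p1 p2 x1 x2

/-- The conditional mutual information `I(X₁;Y|X₂)` under `p₁·p₂`. -/
def Icond1 (W : X1 → X2 → Y → ℝ) (p1 : X1 → ℝ) (p2 : X2 → ℝ) : ℝ :=
  ∑ x1, ∑ x2, ∑ y, p1 x1 * p2 x2 * W x1 x2 y * iDensC1 W p1 x1 x2 y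

/-- The conditional mutual information `I(X₂;Y|X₁)` under `p₁·p₂`. -/
def Icond2 (W : X1 → X2 → Y → ℝ) (p1 : X1 → ℝ) (p2 : X2 → ℝ) : ℝ :=
  ∑ x1, ∑ x2, ∑ y, p1 x1 * p2 x2 * W x1 x2 y * iDensC2 W p2 x1 x2 y

/-- `V₁ = Var(i(X₁,X₂))`, the information variance of the codewords. -/
def Vone (W : X1 → X2 → Y → ℝ) (p1 : X1 → ℝ) (p2 : X2 → ℝ) : ℝ :=
  ∑ x1, ∑ x2, p1 x1 * p2 x2 * (iBar W p1 p2 x1 x2 - Isum W p1 p2) ^ 2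

/-- `V₂ = E[Var(i(X₁,X₂;Y)|X₁,X₂)]`, the information variance of the channel noise. -/
def Vtwo (W : X1 → X2 → Y → ℝ) (p1 : X1 → ℝ) (p2 : X2 → ℝ) : ℝ :=
  ∑ x1, ∑ x2, ∑ y,
    p1 x1 * p2 x2 * W x1 x2 y * (iDens W p1 p2 x1 x2 y - iBar W p1 p2 x1 x2) ^ 2

/-- The average error probability of an `(M₁,M₂,K)` facilitated MAC code (facilitator `e`,
encoders `f₁, f₂`, decoder `g`) on the `n`-fold memoryless product channel. -/
def avgErr (W : X1 → X2 → Y → ℝ) {n M1 M2 K : ℕ}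
    (e : Fin M1 → Fin M2 → Fin K)
    (f1 : Fin M1 → Fin K → Fin n → X1) (f2 : Fin M2 → Fin K → Fin n → X2)
    (g : (Fin n → Y) → Fin M1 × Fin M2) : ℝ :=
  (1 / ((M1 : ℝ) * M2)) * ∑ m1, ∑ m2, ∑ y : Fin n → Y,
    (∏ i, W (f1 m1 (e m1 m2) i) (f2 m2 (e m1 m2) i) (y i)) *
      (if g y = (m1, m2) then 0 else 1)

/-- Existence of an `(n,M₁,M₂,K,ε)` facilitated MAC code. -/
def ExistsCode (W : X1 → X2 → Y → ℝ) (n M1 M2 K : ℕ) (ε : ℝ) : Prop :=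
  ∃ (e : Fin M1 → Fin M2 → Fin K) (f1 : Fin M1 → Fin K → Fin n → X1)
    (f2 : Fin M2 → Fin K → Fin n → X2) (g : (Fin n → Y) → Fin M1 × Fin M2),
    avgErr W e f1 f2 g ≤ ε

/-- The fundamental sum-rate limit `R_sum(n,ε,K)`. -/
def Rsum (W : X1 → X2 → Y → ℝ) (n : ℕ) (ε : ℝ) (K : ℕ) : ℝ :=
  sSup {r | ∃ M1 M2 : ℕ, 0 < M1 ∧ 0 < M2 ∧ ExistsCode W n M1 M2 K ε ∧
    r = Real.logb 2 ((M1 : ℝ) * M2) / n}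

/-- The sum-capacity `C_sum = max_{p₁·p₂} I(X₁,X₂;Y)`. -/
def Csum (W : X1 → X2 → Y → ℝ) : ℝ :=
  sSup {r | ∃ p1 p2, IsPMF p1 ∧ IsPMF p2 ∧ r = Isum W p1 p2}

/-- `Var(i(X₁,X₂;Y))` under the product input pmf. -/
def VarTot (W : X1 → X2 → Y → ℝ) (p1 : X1 → ℝ) (p2 : X2 → ℝ) : ℝ :=
  ∑ x1, ∑ x2, ∑ y,
    p1 x1 * p2 x2 * W x1 x2 y * (iDens W p1 p2 x1 x2 y - Isum W p1 p2) ^ 2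

/-- The standard Gaussian CDF `Φ`. -/
def stdNormCDF (x : ℝ) : ℝ :=
  ((ProbabilityTheory.gaussianReal 0 1) (Set.Iic x)).toReal

/-- The inverse `Φ⁻¹` of the standard Gaussian CDF. -/
def stdNormCDFinv (p : ℝ) : ℝ := sSup {x | stdNormCDF x ≤ p}

set_option linter.unusedSectionVars false

/-! ### The standard Gaussian distribution function -/

/-- The density of the standard Gaussian law. -/
def gaussDens (x : ℝ) : ℝ := (Real.sqrt (2 * Real.pi))⁻¹ * Real.exp (-x ^ 2 / 2)

lemma gaussDens_eq (x : ℝ) : ProbabilityTheory.gaussianPDFReal 0 1 x = gaussDens x := by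
  simp [ProbabilityTheory.gaussianPDFReal, gaussDens]

lemma gaussDens_pos (x : ℝ) : 0 < gaussDens x := by
  unfold gaussDens; positivity

lemma gaussDens_le_one (x : ℝ) : gaussDens x ≤ 1 := by
  unfold gaussDens
  have h1 : (Real.sqrt (2 * Real.pi))⁻¹ ≤ 1 := by
    apply inv_le_one_of_one_le₀
    rw [Real.one_le_sqrt]
    linarith [Real.pi_gt_three]
  have h2 : Real.exp (-x ^ 2 / 2) ≤ 1 := by
    rw [Real.exp_le_one_iff]; nlinarith [sq_nonneg x]
  calc _ ≤ (1 : ℝ) * 1 := by gcongr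
    _ = 1 := by norm_num

lemma integrable_gaussDens : MeasureTheory.Integrable gaussDens := by
  have := ProbabilityTheory.integrable_gaussianPDFReal 0 1
  exact this.congr (by filter_upwards with x; exact gaussDens_eq x)

lemma continuous_gaussDens : Continuous gaussDens := by
  unfold gaussDens; fun_prop

lemma stdNormCDF_eq_integral (x : ℝ) : stdNormCDF x = ∫ t in Set.Iic x, gaussDens t := by
  unfold stdNormCDF
  rw [ProbabilityTheory.gaussianReal_apply_eq_integral 0 one_ne_zero, ENNReal.toReal_ofReal]
  · simp_rw [gaussDens_eq]
  · exact MeasureTheory.integral_nonneg fun t => ProbabilityTheory.gaussianPDFReal_nonneg _ _ _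

lemma stdNormCDF_sub (a b : ℝ) : stdNormCDF b - stdNormCDF a = ∫ t in a..b, gaussDens t := by
  rw [stdNormCDF_eq_integral, stdNormCDF_eq_integral]
  exact intervalIntegral.integral_Iic_sub_Iic integrable_gaussDens.integrableOn
    integrable_gaussDens.integrableOn

lemma hasDerivAt_stdNormCDF (x : ℝ) : HasDerivAt stdNormCDF (gaussDens x) x := by
  have h : stdNormCDF = fun y => (∫ t in (0:ℝ)..y, gaussDens t) + stdNormCDF 0 := by
    funext y; rw [← stdNormCDF_sub]; ring
  rw [h]
  exact (continuous_gaussDens.integral_hasStrictDerivAt 0 x).hasDerivAt.add_const _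

lemma stdNormCDF_eq_cdf (x : ℝ) :
    stdNormCDF x = ProbabilityTheory.cdf (ProbabilityTheory.gaussianReal 0 1) x := by
  rw [ProbabilityTheory.cdf_eq_real]; rfl

lemma stdNormCDF_nonneg (x : ℝ) : 0 ≤ stdNormCDF x := ENNReal.toReal_nonneg

lemma stdNormCDF_le_one (x : ℝ) : stdNormCDF x ≤ 1 := by
  rw [stdNormCDF_eq_cdf]; exact ProbabilityTheory.cdf_le_one _ _

lemma stdNormCDF_mono : Monotone stdNormCDF := by
  intro a b h
  rw [stdNormCDF_eq_cdf, stdNormCDF_eq_cdf]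
  exact ProbabilityTheory.monotone_cdf _ h

lemma stdNormCDF_neg (x : ℝ) : stdNormCDF (-x) = 1 - stdNormCDF x := by
  have hI : (1:ℝ) = ∫ t, gaussDens t := by
    rw [← ProbabilityTheory.integral_gaussianPDFReal_eq_one 0 one_ne_zero]
    simp_rw [gaussDens_eq]
  have h1 := MeasureTheory.integral_add_compl (measurableSet_Iic (a := x)) integrable_gaussDens
  rw [Set.compl_Iic, ← hI] at h1
  have h2 : ∫ t in Set.Iic (-x), gaussDens t = ∫ t in Set.Ioi x, gaussDens t := by
    rw [← integral_comp_neg_Ioi]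
    simp [gaussDens]
  rw [stdNormCDF_eq_integral, stdNormCDF_eq_integral, h2]; linarith

lemma hasDerivAt_gaussDens (x : ℝ) : HasDerivAt gaussDens (-x * gaussDens x) x := by
  unfold gaussDens
  have h1 : HasDerivAt (fun x : ℝ => -x ^ 2 / 2) (-x) x := by
    exact (((hasDerivAt_pow 2 x).neg).div_const 2).congr_deriv (by norm_num; ring)
  refine (h1.exp.const_mul (Real.sqrt (2 * Real.pi))⁻¹).congr_deriv ?_
  ring

/-- Mills ratio bound in the left tail: integrate `φ(x) * (-w) ≤ -x * φ(x) = φ'(x)` over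
`x ≤ w`. -/
lemma mills_left (w : ℝ) : -w * stdNormCDF w ≤ gaussDens w := by
  have hlim : Filter.Tendsto gaussDens Filter.atBot (nhds 0) := by
    unfold gaussDens
    rw [← mul_zero (Real.sqrt (2 * Real.pi))⁻¹]
    apply Filter.Tendsto.const_mul
    apply Real.tendsto_exp_atBot.comp
    have : Filter.Tendsto (fun x : ℝ => x ^ 2 / 2) Filter.atBot Filter.atTop := by
      apply Filter.Tendsto.atTop_div_const (by norm_num)
      have := (Filter.tendsto_pow_atTop (α := ℝ) (n := 2) (by norm_num)).comp
        Filter.tendsto_neg_atBot_atTop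
      refine this.congr fun x => ?_
      simp
    refine (Filter.tendsto_neg_atTop_atBot.comp this).congr fun x => ?_
    simp [neg_div]
  have hIntegr : MeasureTheory.IntegrableOn (fun x => -x * gaussDens x) (Set.Iic w) := by
    have := ((integrable_mul_exp_neg_mul_sq (b := 1 / 2) (by norm_num)).const_mul
      (-(Real.sqrt (2 * Real.pi))⁻¹))
    refine (this.congr ?_).integrableOn
    filter_upwards with x
    have h : -x ^ 2 / 2 = -(1 / 2) * x ^ 2 := by ring
    simp only [gaussDens, h]; ring
  have hI := MeasureTheory.integral_Iic_of_hasDerivAt_of_tendsto' (a := w)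
    (fun x _ => hasDerivAt_gaussDens x) hIntegr hlim
  rw [stdNormCDF_eq_integral, ← MeasureTheory.integral_const_mul]
  calc _ ≤ ∫ x in Set.Iic w, -x * gaussDens x := by
        apply MeasureTheory.setIntegral_mono_on (integrable_gaussDens.integrableOn.const_mul _) hIntegr
          measurableSet_Iic
        intro x hx
        have := gaussDens_pos x
        have hx : x ≤ w := hx
        nlinarith
    _ = _ := by rw [hI]; ring

lemma mills_right (w : ℝ) : w * (1 - stdNormCDF w) ≤ gaussDens w := by
  have := mills_left (-w)
  rw [stdNormCDF_neg] at this
  simpa [gaussDens] using this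

/-! ### The Stein solution for an indicator -/

/-- The bounded solution `f_z` of the Stein equation
`(d/dw) f(w) - w * f(w) = 1{w ≤ z} - Φ(z)`; the two usual branches
`w ≤ z` and `w > z` are merged by writing `Φ(min w z)`. -/
def steinSol (z w : ℝ) : ℝ :=
  (stdNormCDF (min w z) - stdNormCDF w * stdNormCDF z) / gaussDens w

lemma continuous_steinSol (z : ℝ) : Continuous (steinSol z) := by
  have h : Continuous stdNormCDF :=
    continuous_iff_continuousAt.2 fun x => (hasDerivAt_stdNormCDF x).continuousAt
  unfold steinSol
  refine Continuous.div (by fun_prop) continuous_gaussDens fun x => (gaussDens_pos x).ne'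

/-- The derivative of `f_z` away from its kink at `w = z`, as read off from the Stein equation. -/
def steinDeriv (z w : ℝ) : ℝ :=
  (if w ≤ z then 1 else 0) - stdNormCDF z + w * steinSol z w

lemma hasDerivAt_steinSol {z w : ℝ} (h : w ≠ z) :
    HasDerivAt (steinSol z) (steinDeriv z w) w := by
  have hφ := (gaussDens_pos w).ne'
  rcases lt_or_gt_of_ne h with h | h
  · have hd : HasDerivAt (fun w => (stdNormCDF w - stdNormCDF w * stdNormCDF z) / gaussDens w)
        (steinDeriv z w) w := by
      refine (((hasDerivAt_stdNormCDF w).sub ((hasDerivAt_stdNormCDF w).mul_const _)).div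
        (hasDerivAt_gaussDens w) hφ).congr_deriv ?_
      simp only [steinDeriv, steinSol, if_pos h.le, min_eq_left h.le, Pi.sub_apply]
      field_simp
      ring
    refine hd.congr_of_eventuallyEq ?_
    filter_upwards [Iio_mem_nhds h] with x hx
    simp only [steinSol, min_eq_left (Set.mem_Iio.1 hx).le]
  · have hd : HasDerivAt (fun w => (stdNormCDF z - stdNormCDF w * stdNormCDF z) / gaussDens w)
        (steinDeriv z w) w := by
      refine (((hasDerivAt_const w (stdNormCDF z)).sub
        ((hasDerivAt_stdNormCDF w).mul_const _)).div
        (hasDerivAt_gaussDens w) hφ).congr_deriv ?_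
      simp only [steinDeriv, steinSol, if_neg (not_le.2 h), min_eq_right h.le, Pi.sub_apply]
      field_simp
      ring
    refine hd.congr_of_eventuallyEq ?_
    filter_upwards [Ioi_mem_nhds h] with x hx
    simp only [steinSol, min_eq_right (Set.mem_Ioi.1 hx).le]

lemma steinSol_nonneg (z w : ℝ) : 0 ≤ steinSol z w := by
  unfold steinSol
  have h1 := stdNormCDF_nonneg w
  have h2 := stdNormCDF_nonneg z
  have h3 := stdNormCDF_le_one w
  have h4 := stdNormCDF_le_one z
  refine div_nonneg ?_ (gaussDens_pos w).le
  rcases le_total w z with h | h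
  · rw [min_eq_left h]; nlinarith
  · rw [min_eq_right h]; nlinarith

lemma steinSol_mul_dens_left (z w : ℝ) : steinSol z w * gaussDens w ≤ stdNormCDF w := by
  unfold steinSol
  rw [div_mul_cancel₀ _ (gaussDens_pos w).ne']
  have h1 := stdNormCDF_nonneg w
  have h2 := stdNormCDF_nonneg z
  have := stdNormCDF_mono (min_le_left w z)
  nlinarith

lemma steinSol_mul_dens_right (z w : ℝ) : steinSol z w * gaussDens w ≤ 1 - stdNormCDF w := by
  unfold steinSol
  rw [div_mul_cancel₀ _ (gaussDens_pos w).ne']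
  have h1 := stdNormCDF_nonneg w
  have h2 := stdNormCDF_nonneg z
  have h3 := stdNormCDF_le_one w
  have h4 := stdNormCDF_le_one z
  rcases le_total w z with h | h
  · have := stdNormCDF_mono h
    rw [min_eq_left h]; nlinarith
  · rw [min_eq_right h]; nlinarith

/-- Follows from the Mills ratio bounds: `f_z * φ` is at most `Φ` and at most `1 - Φ`. -/
lemma abs_mul_steinSol_le (z w : ℝ) : |w * steinSol z w| ≤ 1 := by
  rw [abs_mul, abs_of_nonneg (steinSol_nonneg z w)]
  have hφ := gaussDens_pos w
  rw [← mul_le_mul_iff_left₀ hφ, one_mul, mul_assoc]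
  rcases le_total w 0 with h | h
  · rw [abs_of_nonpos h]
    exact (mul_le_mul_of_nonneg_left (steinSol_mul_dens_left z w) (by linarith)).trans
      (mills_left w)
  · rw [abs_of_nonneg h]
    exact (mul_le_mul_of_nonneg_left (steinSol_mul_dens_right z w) h).trans (mills_right w)

/-- A common bound for `f_z` and for its derivative, uniform in `z` and not optimised. -/
def steinBound : ℝ := (gaussDens 1)⁻¹ + 2

lemma steinBound_ge : 2 ≤ steinBound := by
  unfold steinBound
  have := inv_pos.2 (gaussDens_pos 1)
  linarith

lemma steinSol_le (z w : ℝ) : steinSol z w ≤ steinBound := by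
  have h0 := steinSol_nonneg z w
  rcases le_total |w| 1 with h | h
  · have h1 : gaussDens 1 ≤ gaussDens w := by
      unfold gaussDens
      have : w ^ 2 ≤ 1 := by rwa [sq_le_one_iff_abs_le_one]
      gcongr 2
      linarith
    have h2 := (steinSol_mul_dens_left z w).trans (stdNormCDF_le_one w)
    have h3 : steinSol z w ≤ (gaussDens 1)⁻¹ := by
      rw [← one_div, le_div_iff₀ (gaussDens_pos 1)]
      nlinarith
    unfold steinBound; linarith
  · have := abs_mul_steinSol_le z w
    rw [abs_mul, abs_of_nonneg h0] at this
    nlinarith [steinBound_ge]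

lemma abs_steinDeriv_le (z w : ℝ) : |steinDeriv z w| ≤ steinBound := by
  have h1 := abs_le.1 (abs_mul_steinSol_le z w)
  have h2 := stdNormCDF_nonneg z
  have h3 := stdNormCDF_le_one z
  have := steinBound_ge
  unfold steinDeriv
  rw [abs_le]
  split_ifs <;> constructor <;> linarith

/-- Mean value inequality for a continuous function differentiable except at one point. -/
lemma le_sub_of_le_deriv_off_point {f d : ℝ → ℝ} {z c a b : ℝ} (hf : Continuous f)
    (hd : ∀ w, w ≠ z → HasDerivAt f (d w) w) (hab : a ≤ b)
    (hc : ∀ w, a < w → w < b → w ≠ z → c ≤ d w) : c * (b - a) ≤ f b - f a := by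
  have key : ∀ a' b', a ≤ a' → b' ≤ b → a' ≤ b' → z ∉ Set.Ioo a' b' →
      c * (b' - a') ≤ f b' - f a' := by
    intro a' b' h1 h2 h3 hz
    refine (convex_Icc a' b').mul_sub_le_image_sub_of_le_deriv hf.continuousOn ?_ ?_ a'
      (Set.left_mem_Icc.2 h3) b' (Set.right_mem_Icc.2 h3) h3
    · rw [interior_Icc]
      intro w hw
      have hne : w ≠ z := fun h => hz (h ▸ hw)
      exact (hd w hne).differentiableAt.differentiableWithinAt
    · rw [interior_Icc]
      intro w hw
      have hne : w ≠ z := fun h => hz (h ▸ hw)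
      rw [(hd w hne).deriv]
      exact hc w (by linarith [hw.1]) (by linarith [hw.2]) hne
  by_cases hz : z ∈ Set.Ioo a b
  · have h1 := key a z le_rfl hz.2.le hz.1.le (by simp)
    have h2 := key z b hz.1.le le_rfl hz.2.le (by simp)
    linarith
  · exact key a b le_rfl le_rfl hab hz

lemma abs_steinSol_sub_le (z a b : ℝ) :
    |steinSol z b - steinSol z a| ≤ steinBound * |b - a| := by
  have key : ∀ a b, a ≤ b → |steinSol z b - steinSol z a| ≤ steinBound * |b - a| := by
    intro a b hab
    have h1 := le_sub_of_le_deriv_off_point (z := z) (c := -steinBound) (continuous_steinSol z)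
      (fun w hw => hasDerivAt_steinSol hw) hab fun w _ _ _ => (abs_le.1 (abs_steinDeriv_le z w)).1
    have h2 := le_sub_of_le_deriv_off_point (z := z) (c := -steinBound) (continuous_steinSol z).neg
      (fun w hw => (hasDerivAt_steinSol hw).neg) hab
      fun w _ _ _ => neg_le_neg (abs_le.1 (abs_steinDeriv_le z w)).2
    rw [abs_of_nonneg (sub_nonneg.2 hab), abs_le]
    simp only [Pi.neg_apply] at h2
    constructor <;> linarith
  rcases le_total a b with h | h
  · exact key a b h
  · rw [abs_sub_comm, abs_sub_comm b a]; exact key b a h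

lemma abs_mul_steinSol_sub_le (z a b : ℝ) :
    |b * steinSol z b - a * steinSol z a| ≤ steinBound * (1 + |a|) * |b - a| := by
  have h : b * steinSol z b - a * steinSol z a
      = a * (steinSol z b - steinSol z a) + (b - a) * steinSol z b := by ring
  rw [h]
  refine (abs_add_le _ _).trans ?_
  rw [abs_mul, abs_mul, abs_of_nonneg (steinSol_nonneg z b)]
  have h1 := abs_steinSol_sub_le z a b
  have h2 := steinSol_le z b
  have h3 := mul_le_mul_of_nonneg_left h1 (abs_nonneg a)
  have h4 := mul_le_mul_of_nonneg_left h2 (abs_nonneg (b - a))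
  linarith

/-- One-sided increment bound for `f_z`. For `w` within `k` of `a`, the Stein equation bounds the
derivative of `f_z` at `w` from below by its value at `a`, with the indicator `1{w ≤ z}` replaced by
`1{a ≤ z - k}`, up to an error linear in `k`. Shrinking the indicator in this way is what makes a
concentration inequality unnecessary in the one-sided Berry–Esseen bound. -/
lemma steinSol_increment {z a u k : ℝ} (hu : |u| ≤ k) :
    u ^ 2 * ((if a ≤ z - k then 1 else 0) - stdNormCDF z + a * steinSol z a
      - steinBound * (1 + |a|) * k) ≤ u * (steinSol z (a + u) - steinSol z a) := by
  set c := (if a ≤ z - k then (1:ℝ) else 0) - stdNormCDF z + a * steinSol z a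
      - steinBound * (1 + |a|) * k with hcdef
  have hB := steinBound_ge
  have hc : ∀ w, |w - a| ≤ k → c ≤ steinDeriv z w := by
    intro w hw
    have h1 := (abs_le.1 (abs_mul_steinSol_sub_le z a w)).1
    have h2 : steinBound * (1 + |a|) * |w - a| ≤ steinBound * (1 + |a|) * k := by gcongr
    have h3 : (if a ≤ z - k then (1:ℝ) else 0) ≤ if w ≤ z then 1 else 0 := by
      have := (abs_le.1 hw).2
      split_ifs <;> linarith
    unfold steinDeriv
    linarith
  obtain ⟨hu1, hu2⟩ := abs_le.1 hu
  rcases le_total 0 u with h | h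
  · have := le_sub_of_le_deriv_off_point (a := a) (b := a + u) (continuous_steinSol z)
      (fun w hw => hasDerivAt_steinSol hw) (by linarith)
      fun w h1 h2 _ => hc w (abs_le.2 ⟨by linarith, by linarith⟩)
    nlinarith
  · have := le_sub_of_le_deriv_off_point (a := a + u) (b := a) (continuous_steinSol z)
      (fun w hw => hasDerivAt_steinSol hw) (by linarith)
      fun w h1 h2 _ => hc w (abs_le.2 ⟨by linarith, by linarith⟩)
    nlinarith

/-! ### Expectations under product pmfs and the one-sided Berry–Esseen bound -/

/-- Expectation of `F` under the `n`-fold product of the pmf `P`, written as a finite sum. -/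
def iidE {Ω : Type*} [Fintype Ω] (P : Ω → ℝ) (n : ℕ) (F : (Fin n → Ω) → ℝ) : ℝ :=
  ∑ ω : Fin n → Ω, (∏ i, P (ω i)) * F ω

section iid
variable {Ω : Type*} [Fintype Ω] {P : Ω → ℝ}

/-- The coordinates are independent: condition on the `i`-th one. -/
lemma iidE_insertNth (n : ℕ) (i : Fin (n + 1)) (F : (Fin (n + 1) → Ω) → ℝ) :
    iidE P (n + 1) F = ∑ x, P x * iidE P n (fun ω => F (i.insertNth x ω)) := by
  unfold iidE
  rw [← (Fin.insertNthEquiv (fun _ => Ω) i).sum_comp, Fintype.sum_prod_type]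
  refine Finset.sum_congr rfl fun x _ => ?_
  rw [Finset.mul_sum]
  refine Finset.sum_congr rfl fun ω _ => ?_
  simp [Fin.insertNthEquiv, Fin.prod_univ_succAbove _ i, mul_assoc]

lemma iidE_add (n : ℕ) (F G : (Fin n → Ω) → ℝ) :
    iidE P n (fun ω => F ω + G ω) = iidE P n F + iidE P n G := by
  simp [iidE, mul_add, Finset.sum_add_distrib]

lemma iidE_sub (n : ℕ) (F G : (Fin n → Ω) → ℝ) :
    iidE P n (fun ω => F ω - G ω) = iidE P n F - iidE P n G := by
  simp [iidE, mul_sub, Finset.sum_sub_distrib]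

lemma iidE_const_mul (n : ℕ) (c : ℝ) (F : (Fin n → Ω) → ℝ) :
    iidE P n (fun ω => c * F ω) = c * iidE P n F := by
  simp only [iidE, Finset.mul_sum]
  exact Finset.sum_congr rfl fun ω _ => by ring

lemma iidE_sum {ι : Type*} (s : Finset ι) (n : ℕ) (F : ι → (Fin n → Ω) → ℝ) :
    iidE P n (fun ω => ∑ i ∈ s, F i ω) = ∑ i ∈ s, iidE P n (F i) := by
  simp only [iidE, Finset.mul_sum]
  exact Finset.sum_comm

lemma sum_prod_pmf (hP : IsPMF P) (n : ℕ) : ∑ ω : Fin n → Ω, ∏ i, P (ω i) = 1 := by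
  have := Finset.prod_univ_sum (fun _ : Fin n => (Finset.univ : Finset Ω)) (fun _ x => P x)
  simp only [hP.2, Finset.prod_const_one, Fintype.piFinset_univ] at this
  exact this.symm

lemma iidE_const (hP : IsPMF P) (n : ℕ) (c : ℝ) : iidE P n (fun _ => c) = c := by
  unfold iidE
  rw [← Finset.sum_mul, sum_prod_pmf hP, one_mul]

lemma iidE_mono (hP : IsPMF P) (n : ℕ) {F G : (Fin n → Ω) → ℝ} (h : ∀ ω, F ω ≤ G ω) :
    iidE P n F ≤ iidE P n G :=
  Finset.sum_le_sum fun ω _ =>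
    mul_le_mul_of_nonneg_left (h ω) (Finset.prod_nonneg fun _ _ => hP.1 _)

lemma iidE_coord (hP : IsPMF P) (n : ℕ) (i : Fin n) (u : Ω → ℝ) :
    iidE P n (fun ω => u (ω i)) = ∑ x, P x * u x := by
  obtain _ | n := n
  · exact i.elim0
  · rw [iidE_insertNth n i]
    simp [iidE_const hP]

lemma iidE_sq_sum (hP : IsPMF P) {u : Ω → ℝ} (hu : ∑ x, P x * u x = 0) (n : ℕ) :
    iidE P n (fun ω => (∑ i, u (ω i)) ^ 2) = n * ∑ x, P x * u x ^ 2 := by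
  induction n with
  | zero => simp [iidE]
  | succ n ih =>
    rw [iidE_insertNth n 0]
    have h : ∀ x, iidE P n (fun ω => (∑ i, u (Fin.insertNth (α := fun _ => Ω) 0 x ω i)) ^ 2)
        = u x ^ 2 + n * ∑ x, P x * u x ^ 2 := by
      intro x
      have h1 : ∀ ω : Fin n → Ω, (∑ i, u (Fin.insertNth (α := fun _ => Ω) 0 x ω i)) ^ 2
          = u x ^ 2 + (2 * u x * (∑ i, u (ω i)) + (∑ i, u (ω i)) ^ 2) := by
        intro ω
        simp [Fin.sum_univ_succ]
        ring
      simp_rw [h1]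
      rw [iidE_add, iidE_add, iidE_const hP, iidE_const_mul, iidE_sum, ih]
      simp [iidE_coord hP, hu]
    simp_rw [h, mul_add, Finset.sum_add_distrib, ← Finset.sum_mul, hP.2]
    push_cast; ring

/-- Chebyshev's inequality for the lower tail of an i.i.d. sum. -/
lemma iidE_chebyshev (hP : IsPMF P) {u : Ω → ℝ} (hu : ∑ x, P x * u x = 0) (n : ℕ) {t : ℝ}
    (ht : 0 < t) :
    iidE P n (fun ω => if ∑ i, u (ω i) ≤ -t then 1 else 0)
      ≤ n * (∑ x, P x * u x ^ 2) / t ^ 2 := by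
  rw [le_div_iff₀ (by positivity), mul_comm, ← iidE_const_mul, ← iidE_sq_sum hP hu]
  refine iidE_mono hP n fun ω => ?_
  split_ifs with h
  · nlinarith
  · nlinarith [sq_nonneg (∑ i, u (ω i))]

lemma iidE_abs_sum_le (hP : IsPMF P) {u : Ω → ℝ} (hu : ∑ x, P x * u x = 0) {n : ℕ}
    (hn : n * ∑ x, P x * u x ^ 2 ≤ 1) : iidE P n (fun ω => |∑ i, u (ω i)|) ≤ 1 := by
  have h : iidE P n (fun ω => |∑ i, u (ω i)|)
      ≤ iidE P n (fun ω => 1 / 2 + 1 / 2 * (∑ i, u (ω i)) ^ 2) := by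
    refine iidE_mono hP n fun ω => ?_
    nlinarith [sq_nonneg (|∑ i, u (ω i)| - 1), sq_abs (∑ i, u (ω i))]
  rw [iidE_add, iidE_const hP, iidE_const_mul, iidE_sq_sum hP hu] at h
  linarith

/-- Stein's method for a normalised sum `S = ∑ u(ω i)` of bounded i.i.d. terms. Writing `T` for
a sum of `n` of the `n + 1` terms, `E[S f(S)]` is at most `E[T f(T)] + O(k)` by smoothness of
`w ↦ w f(w)`, and, leaving one term out, at least `P(T ≤ z - k) - Φ(z) + E[T f(T)] - O(k)` by the
increment bound; comparing the two bounds `P(T ≤ z - k)`, hence `P(S ≤ z - 2k)`. -/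
lemma stein_one_sided (hP : IsPMF P) {u : Ω → ℝ} {k : ℝ} (n : ℕ) (hu : ∑ x, P x * u x = 0)
    (hv : (n + 1) * ∑ x, P x * u x ^ 2 = 1) (hk : ∀ x, |u x| ≤ k) (z : ℝ) :
    iidE P (n + 1) (fun ω => if ∑ i, u (ω i) ≤ z - 2 * k then 1 else 0)
      ≤ stdNormCDF z + 4 * steinBound * k := by
  have hB := steinBound_ge
  have hk0 : 0 ≤ k := by
    by_contra h
    have : ∀ x, P x * u x ^ 2 = 0 := fun x => absurd ((abs_nonneg _).trans (hk x)) h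
    simp [this] at hv
  set m : ℝ → ℝ := fun w => w * steinSol z w with hm
  set T : (Fin n → Ω) → ℝ := fun ω => ∑ i, u (ω i) with hT
  have hsum : ∀ (i : Fin (n + 1)) x (ω : Fin n → Ω),
      ∑ j, u (Fin.insertNth (α := fun _ => Ω) i x ω j) = T ω + u x := by
    intro i x ω
    simp [Fin.sum_univ_succAbove _ i, hT, add_comm]
  have hET : iidE P n (fun ω => |T ω|) ≤ 1 := by
    refine iidE_abs_sum_le hP hu ?_
    have : 0 ≤ ∑ x, P x * u x ^ 2 :=
      Finset.sum_nonneg fun x _ => mul_nonneg (hP.1 x) (sq_nonneg _)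
    linarith
  -- upper bound on `E[S f(S)]`
  have hup : iidE P (n + 1) (fun ω => m (∑ i, u (ω i)))
      ≤ iidE P n (fun ω => m (T ω)) + 2 * steinBound * k := by
    rw [iidE_insertNth n 0]
    simp_rw [hsum]
    have : ∀ x, iidE P n (fun ω => m (T ω + u x)) ≤
        iidE P n (fun ω => m (T ω)) + 2 * steinBound * k := by
      intro x
      calc _ ≤ iidE P n (fun ω => m (T ω) + (steinBound * k + steinBound * k * |T ω|)) := by
            refine iidE_mono hP n fun ω => ?_
            have h1 := (abs_le.1 (abs_mul_steinSol_sub_le z (T ω) (T ω + u x))).2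
            have h2 : steinBound * (1 + |T ω|) * |T ω + u x - T ω|
                ≤ steinBound * (1 + |T ω|) * k := by
              rw [add_sub_cancel_left]; gcongr; exact hk x
            simp only [hm]; linarith
        _ ≤ _ := by
            rw [iidE_add, iidE_add, iidE_const hP, iidE_const_mul]
            have : steinBound * k * iidE P n (fun ω => |T ω|) ≤ steinBound * k * 1 := by gcongr
            linarith
    calc _ ≤ ∑ x, P x * (iidE P n (fun ω => m (T ω)) + 2 * steinBound * k) :=
          Finset.sum_le_sum fun x _ => mul_le_mul_of_nonneg_left (this x) (hP.1 x)
      _ = _ := by rw [← Finset.sum_mul, hP.2, one_mul]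
  -- lower bound on `E[S f(S)]`, using that `u` has mean zero to subtract `f(T)`
  have hlow : iidE P n (fun ω => if T ω ≤ z - k then (1:ℝ) else 0) - stdNormCDF z
      + iidE P n (fun ω => m (T ω)) - 2 * steinBound * k
      ≤ iidE P (n + 1) (fun ω => m (∑ i, u (ω i))) := by
    have h1 : iidE P (n + 1) (fun ω => m (∑ i, u (ω i)))
        = (n + 1) * ∑ x, P x * iidE P n (fun ω => u x * steinSol z (T ω + u x)) := by
      simp only [hm]
      simp_rw [Finset.sum_mul]
      rw [iidE_sum]
      have : ∀ i : Fin (n + 1), iidE P (n + 1)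
          (fun ω => u (ω i) * steinSol z (∑ j, u (ω j)))
          = ∑ x, P x * iidE P n (fun ω => u x * steinSol z (T ω + u x)) := by
        intro i
        rw [iidE_insertNth n i]
        simp_rw [hsum]
        simp
      simp [this]
    have h2 : ∑ x, P x * iidE P n (fun ω => u x * steinSol z (T ω + u x))
        = ∑ x, P x * iidE P n (fun ω => u x * (steinSol z (T ω + u x) - steinSol z (T ω))) := by
      have : ∀ x, iidE P n (fun ω => u x * (steinSol z (T ω + u x) - steinSol z (T ω)))
          = iidE P n (fun ω => u x * steinSol z (T ω + u x))
            - u x * iidE P n (fun ω => steinSol z (T ω)) := by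
        intro x
        rw [← iidE_const_mul, ← iidE_sub]
        simp_rw [mul_sub]
      simp_rw [this, mul_sub, Finset.sum_sub_distrib, ← mul_assoc]
      rw [← Finset.sum_mul, hu, zero_mul, sub_zero]
    set c : (Fin n → Ω) → ℝ := fun ω => (if T ω ≤ z - k then (1:ℝ) else 0) - stdNormCDF z
      + m (T ω) - (steinBound * k + steinBound * k * |T ω|) with hc
    have h3 : ∀ x, u x ^ 2 * iidE P n c
        ≤ iidE P n (fun ω => u x * (steinSol z (T ω + u x) - steinSol z (T ω))) := by
      intro x
      rw [← iidE_const_mul]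
      refine iidE_mono hP n fun ω => ?_
      have := steinSol_increment (z := z) (a := T ω) (hk x)
      refine le_trans (le_of_eq ?_) this
      simp only [hc, hm]; ring
    have h4 : iidE P n c ≤ (n + 1) *
        ∑ x, P x * iidE P n (fun ω => u x * (steinSol z (T ω + u x) - steinSol z (T ω))) := by
      calc iidE P n c = (n + 1) * ∑ x, P x * (u x ^ 2 * iidE P n c) := by
            simp_rw [← mul_assoc]
            rw [← Finset.sum_mul, ← mul_assoc, hv, one_mul]
        _ ≤ _ := by
            gcongr with x
            · exact hP.1 x
            · exact h3 x
    rw [h1, h2]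
    refine le_trans ?_ h4
    rw [hc, iidE_sub, iidE_add, iidE_sub, iidE_const hP, iidE_add, iidE_const hP, iidE_const_mul]
    have : steinBound * k * iidE P n (fun ω => |T ω|) ≤ steinBound * k * 1 := by gcongr
    linarith
  have hcmp : iidE P (n + 1) (fun ω => if ∑ i, u (ω i) ≤ z - 2 * k then (1:ℝ) else 0)
      ≤ iidE P n (fun ω => if T ω ≤ z - k then (1:ℝ) else 0) := by
    rw [iidE_insertNth n 0]
    simp_rw [hsum]
    calc _ ≤ ∑ x, P x * iidE P n (fun ω => if T ω ≤ z - k then (1:ℝ) else 0) := by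
          refine Finset.sum_le_sum fun x _ => mul_le_mul_of_nonneg_left ?_ (hP.1 x)
          refine iidE_mono hP n fun ω => ?_
          have := (abs_le.1 (hk x)).1
          split_ifs <;> linarith
      _ = _ := by rw [← Finset.sum_mul, hP.2, one_mul]
  linarith

lemma stdNormCDF_add_le (x : ℝ) {d : ℝ} (hd : 0 ≤ d) : stdNormCDF (x + d) ≤ stdNormCDF x + d := by
  have h := (convex_univ (𝕜 := ℝ) (E := ℝ)).image_sub_le_mul_sub_of_deriv_le
    (f := stdNormCDF) (C := 1)
    (continuous_iff_continuousAt.2 fun y => (hasDerivAt_stdNormCDF y).continuousAt).continuousOn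
    (fun y _ => (hasDerivAt_stdNormCDF y).differentiableAt.differentiableWithinAt)
    (fun y _ => by rw [(hasDerivAt_stdNormCDF y).deriv]; exact gaussDens_le_one y)
    x (Set.mem_univ _) (x + d) (Set.mem_univ _) (by linarith)
  linarith

/-- One-sided Berry–Esseen bound for i.i.d. sums over a finite alphabet. The constant `B` depends on
`P` and `h` but not on `n` or `x`. -/
theorem berry_esseen_upper (hP : IsPMF P) {h : Ω → ℝ} (hmean : ∑ x, P x * h x = 0)
    {σ : ℝ} (hσ : 0 < σ) (hvar : ∑ x, P x * h x ^ 2 = σ ^ 2) :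
    ∃ B : ℝ, 0 ≤ B ∧ ∀ n : ℕ, 1 ≤ n → ∀ x : ℝ,
      iidE P n (fun ω => if ∑ i, h (ω i) ≤ x * σ * Real.sqrt n then 1 else 0)
        ≤ stdNormCDF x + B / Real.sqrt n := by
  have hB := steinBound_ge
  set H := ∑ x, |h x| with hH
  have hH0 : 0 ≤ H := Finset.sum_nonneg fun x _ => abs_nonneg _
  refine ⟨(4 * steinBound + 2) * (H / σ), by positivity, ?_⟩
  intro n hn x
  obtain ⟨n, rfl⟩ : ∃ k, n = k + 1 := ⟨n - 1, by omega⟩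
  set r := Real.sqrt ((n + 1 : ℕ) : ℝ) with hr
  have hr0 : 0 < r := Real.sqrt_pos.2 (by positivity)
  have hr2 : r ^ 2 = n + 1 := by rw [hr, Real.sq_sqrt (by positivity)]; push_cast; ring
  set k := H / σ / r with hkdef
  have hk0 : 0 ≤ k := by positivity
  have key := stein_one_sided hP (u := fun x => h x / (σ * r)) (k := k) n ?_ ?_ ?_ (x + 2 * k)
  · have h1 := stdNormCDF_add_le x (d := 2 * k) (by positivity)
    have h2 : ∀ ω : Fin (n + 1) → Ω, (∑ i, h (ω i) / (σ * r) ≤ x + 2 * k - 2 * k) ↔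
        ∑ i, h (ω i) ≤ x * σ * r := by
      intro ω
      rw [← Finset.sum_div, div_le_iff₀ (by positivity), add_sub_cancel_right, mul_assoc]
    simp_rw [h2] at key
    have h3 : (4 * steinBound + 2) * (H / σ) / r = 4 * steinBound * k + 2 * k := by
      rw [hkdef]; ring
    rw [h3]; linarith
  · simp_rw [← mul_div_assoc]
    rw [← Finset.sum_div, hmean, zero_div]
  · simp_rw [div_pow, ← mul_div_assoc]
    rw [← Finset.sum_div, hvar, mul_pow, hr2]
    field_simp
  · intro y
    simp only [hkdef]
    rw [abs_div, abs_of_pos (by positivity : 0 < σ * r), div_div]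
    gcongr
    exact Finset.single_le_sum (f := fun x => |h x|) (fun x _ => abs_nonneg _) (Finset.mem_univ y)

end iid

/-! ### One-shot random coding for the multiple access channel -/

lemma iidE_coord2 {Ω : Type*} [Fintype Ω] {P : Ω → ℝ} (hP : IsPMF P) (n : ℕ) {i j : Fin n}
    (hij : i ≠ j) (F : Ω → Ω → ℝ) :
    iidE P n (fun ω => F (ω i) (ω j)) = ∑ x, P x * ∑ y, P y * F x y := by
  obtain _ | n := n
  · exact i.elim0
  · obtain ⟨k, rfl⟩ := Fin.exists_succAbove_eq hij.symm
    rw [iidE_insertNth n i]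
    simp [iidE_coord hP n k]

/-- Derandomisation: some outcome is no worse than the average. -/
lemma exists_le_of_iidE_le {Ω : Type*} [Fintype Ω] {P : Ω → ℝ} (hP : IsPMF P) {n : ℕ}
    {F : (Fin n → Ω) → ℝ} {R : ℝ} (h : iidE P n F ≤ R) : ∃ ω, F ω ≤ R := by
  have : Nonempty (Fin n → Ω) := by
    by_contra hne
    rw [not_nonempty_iff] at hne
    have := sum_prod_pmf hP n
    simp at this
  obtain ⟨ω, hω⟩ := Finite.exists_min F
  refine ⟨ω, le_trans ?_ h⟩
  rw [← iidE_const hP n (F ω)]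
  exact iidE_mono hP n hω

lemma pmf_avg_le {Ω : Type*} [Fintype Ω] {P : Ω → ℝ} (hP : IsPMF P) {F : Ω → ℝ} {C : ℝ}
    (h : ∀ x, F x ≤ C) : ∑ x, P x * F x ≤ C := by
  calc _ ≤ ∑ x, P x * C := Finset.sum_le_sum fun x _ => mul_le_mul_of_nonneg_left (h x) (hP.1 x)
    _ = C := by rw [← Finset.sum_mul, hP.2, one_mul]

section oneshot
variable (V : X1 → X2 → Y → ℝ) (q1 : X1 → ℝ) (q2 : X2 → ℝ) (t1 t2 t12 : ℝ)

/-- The decoder test for a codeword pair and an output: all three information densities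
`i(x₁;y|x₂)`, `i(x₂;y|x₁)`, `i(x₁,x₂;y)` exceed the logarithms of the thresholds `t1`, `t2`, `t12`.
Multiplied out, so that no logarithm of zero occurs. -/
def passes (x1 : X1) (x2 : X2) (y : Y) : Prop :=
  t1 * condOut2 V q1 x2 y < V x1 x2 y ∧ t2 * condOut1 V q2 x1 y < V x1 x2 y ∧
    t12 * outDist V q1 q2 y < V x1 x2 y

/-- Probability that the pair `(x1', x2')` passes the test when `(x1, x2)` is sent. -/
def confuse (x1 x1' : X1) (x2 x2' : X2) : ℝ :=
  ∑ y, V x1 x2 y * (if passes V q1 q2 t1 t2 t12 x1' x2' y then 1 else 0)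

/-- Probability that the transmitted pair `(x1, x2)` fails the test. -/
def missed (x1 : X1) (x2 : X2) : ℝ :=
  ∑ y, V x1 x2 y * (if passes V q1 q2 t1 t2 t12 x1 x2 y then 0 else 1)

variable {V q1 q2 t1 t2 t12}

/-- Change of measure: an event on which `t * Q` lies below a conditional pmf has `Q`-mass at
most `1 / t`. -/
lemma sum_indicator_le (hV : IsChannel V) {t : ℝ} (ht : 0 < t) (Q : Y → ℝ) (S : Y → Prop)
    (x1 : X1) (x2 : X2) (h : ∀ y, S y → t * Q y < V x1 x2 y) :
    ∑ y, Q y * (if S y then 1 else 0) ≤ 1 / t := by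
  calc _ ≤ ∑ y, V x1 x2 y / t := by
        refine Finset.sum_le_sum fun y _ => ?_
        rw [le_div_iff₀ ht]
        split_ifs with hS
        · linarith [h y hS]
        · simpa using hV.1 x1 x2 y
    _ = 1 / t := by rw [← Finset.sum_div, hV.2]

lemma confuse1_le (hV : IsChannel V) (ht : 0 < t1) (x1' : X1) (x2 : X2) :
    ∑ x1, q1 x1 * confuse V q1 q2 t1 t2 t12 x1 x1' x2 x2 ≤ 1 / t1 := by
  refine le_trans (le_of_eq ?_) (sum_indicator_le hV ht (condOut2 V q1 x2)
    (passes V q1 q2 t1 t2 t12 x1' x2) x1' x2 fun y h => h.1)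
  simp only [confuse, condOut2, Finset.mul_sum, Finset.sum_mul]
  rw [Finset.sum_comm]
  simp only [mul_assoc]

lemma confuse2_le (hV : IsChannel V) (ht : 0 < t2) (x1 : X1) (x2' : X2) :
    ∑ x2, q2 x2 * confuse V q1 q2 t1 t2 t12 x1 x1 x2 x2' ≤ 1 / t2 := by
  refine le_trans (le_of_eq ?_) (sum_indicator_le hV ht (condOut1 V q2 x1)
    (passes V q1 q2 t1 t2 t12 x1 x2') x1 x2' fun y h => h.2.1)
  simp only [confuse, condOut1, Finset.mul_sum, Finset.sum_mul]
  rw [Finset.sum_comm]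
  simp only [mul_assoc]

lemma confuse12_le (hV : IsChannel V) (ht : 0 < t12) (x1' : X1) (x2' : X2) :
    ∑ x1, q1 x1 * ∑ x2, q2 x2 * confuse V q1 q2 t1 t2 t12 x1 x1' x2 x2' ≤ 1 / t12 := by
  refine le_trans (le_of_eq ?_) (sum_indicator_le hV ht (outDist V q1 q2)
    (passes V q1 q2 t1 t2 t12 x1' x2') x1' x2' fun y h => h.2.2)
  simp only [confuse, outDist, Finset.mul_sum, Finset.sum_mul]
  rw [Finset.sum_comm' (t' := Finset.univ) (s' := fun _ => Finset.univ) (by simp)]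
  rw [Finset.sum_congr rfl fun x2 _ => Finset.sum_comm]
  rw [Finset.sum_comm]
  refine Finset.sum_congr rfl fun y _ => ?_
  rw [Finset.sum_comm]
  simp only [mul_assoc]

/-- For a fixed codebook, decode to some message pair that passes the test. An error requires that
the true pair fails, or that a pair differing in the first, the second or both messages passes. -/
lemma exists_decoder (hV : IsChannel V) {M1 M2 : ℕ} (hM1 : 0 < M1) (hM2 : 0 < M2)
    (c1 : Fin M1 → X1) (c2 : Fin M2 → X2) :
    ∃ g : Y → Fin M1 × Fin M2, ∀ m1 m2,
      ∑ y, V (c1 m1) (c2 m2) y * (if g y = (m1, m2) then 0 else 1)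
        ≤ missed V q1 q2 t1 t2 t12 (c1 m1) (c2 m2)
          + ∑ m1' ∈ Finset.univ.erase m1,
              confuse V q1 q2 t1 t2 t12 (c1 m1) (c1 m1') (c2 m2) (c2 m2)
          + ∑ m2' ∈ Finset.univ.erase m2,
              confuse V q1 q2 t1 t2 t12 (c1 m1) (c1 m1) (c2 m2) (c2 m2')
          + ∑ m1' ∈ Finset.univ.erase m1, ∑ m2' ∈ Finset.univ.erase m2,
              confuse V q1 q2 t1 t2 t12 (c1 m1) (c1 m1') (c2 m2) (c2 m2') := by
  let S : Y → Fin M1 × Fin M2 → Prop := fun y p => passes V q1 q2 t1 t2 t12 (c1 p.1) (c2 p.2) y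
  have hS : ∀ y, ∃ p, (∃ p', S y p') → S y p := by
    intro y
    by_cases h : ∃ p', S y p'
    · exact ⟨h.choose, fun _ => h.choose_spec⟩
    · exact ⟨(⟨0, hM1⟩, ⟨0, hM2⟩), fun h' => absurd h' h⟩
  choose g hg using hS
  refine ⟨g, ?_⟩
  intro m1 m2
  simp only [missed, confuse]
  rw [Finset.sum_comm (s := Finset.univ.erase m1) (t := (Finset.univ : Finset Y)),
    Finset.sum_comm (s := Finset.univ.erase m2) (t := (Finset.univ : Finset Y)),
    Finset.sum_congr rfl fun m1' (_ : m1' ∈ Finset.univ.erase m1) =>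
      Finset.sum_comm (s := Finset.univ.erase m2) (t := (Finset.univ : Finset Y)),
    Finset.sum_comm (s := Finset.univ.erase m1) (t := (Finset.univ : Finset Y)),
    ← Finset.sum_add_distrib, ← Finset.sum_add_distrib, ← Finset.sum_add_distrib]
  refine Finset.sum_le_sum fun y _ => ?_
  simp only [← Finset.mul_sum, ← mul_add]
  refine mul_le_mul_of_nonneg_left ?_ (hV.1 _ _ _)
  have n1 : 0 ≤ ∑ i ∈ Finset.univ.erase m1,
      (if passes V q1 q2 t1 t2 t12 (c1 i) (c2 m2) y then (1:ℝ) else 0) :=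
    Finset.sum_nonneg fun _ _ => by split_ifs <;> norm_num
  have n2 : 0 ≤ ∑ i ∈ Finset.univ.erase m2,
      (if passes V q1 q2 t1 t2 t12 (c1 m1) (c2 i) y then (1:ℝ) else 0) :=
    Finset.sum_nonneg fun _ _ => by split_ifs <;> norm_num
  have n3 : 0 ≤ ∑ i ∈ Finset.univ.erase m1, ∑ j ∈ Finset.univ.erase m2,
      (if passes V q1 q2 t1 t2 t12 (c1 i) (c2 j) y then (1:ℝ) else 0) :=
    Finset.sum_nonneg fun _ _ => Finset.sum_nonneg fun _ _ => by split_ifs <;> norm_num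
  by_cases hm : passes V q1 q2 t1 t2 t12 (c1 m1) (c2 m2) y
  · have hp' : passes V q1 q2 t1 t2 t12 (c1 (g y).1) (c2 (g y).2) y := hg y ⟨(m1, m2), hm⟩
    rw [if_pos hm]
    generalize g y = p at hp'
    split_ifs with heq
    · linarith
    · by_cases h1 : p.1 = m1
      · have h2 : p.2 ≠ m2 := fun h => heq (Prod.ext h1 h)
        have := Finset.single_le_sum (s := Finset.univ.erase m2)
          (f := fun i => if passes V q1 q2 t1 t2 t12 (c1 m1) (c2 i) y then (1:ℝ) else 0)
          (fun _ _ => by split_ifs <;> norm_num)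
          (Finset.mem_erase.2 ⟨h2, Finset.mem_univ _⟩)
        rw [h1] at hp'
        simp only [if_pos hp'] at this
        linarith
      · by_cases h2 : p.2 = m2
        · have := Finset.single_le_sum (s := Finset.univ.erase m1)
            (f := fun i => if passes V q1 q2 t1 t2 t12 (c1 i) (c2 m2) y then (1:ℝ) else 0)
            (fun _ _ => by split_ifs <;> norm_num)
            (Finset.mem_erase.2 ⟨h1, Finset.mem_univ _⟩)
          rw [h2] at hp'
          simp only [if_pos hp'] at this
          linarith
        · have a1 := Finset.single_le_sum (s := Finset.univ.erase m1)
            (f := fun i => ∑ j ∈ Finset.univ.erase m2,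
              if passes V q1 q2 t1 t2 t12 (c1 i) (c2 j) y then (1:ℝ) else 0)
            (fun _ _ => Finset.sum_nonneg fun _ _ => by split_ifs <;> norm_num)
            (Finset.mem_erase.2 ⟨h1, Finset.mem_univ _⟩)
          have a2 := Finset.single_le_sum (s := Finset.univ.erase m2)
            (f := fun j => if passes V q1 q2 t1 t2 t12 (c1 p.1) (c2 j) y then (1:ℝ) else 0)
            (fun _ _ => by split_ifs <;> norm_num)
            (Finset.mem_erase.2 ⟨h2, Finset.mem_univ _⟩)
          simp only [if_pos hp'] at a2
          linarith
  · rw [if_neg hm]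
    have : (if g y = (m1, m2) then (0:ℝ) else 1) ≤ 1 := by split_ifs <;> norm_num
    linarith

/-- One-shot achievability for the MAC: the average over i.i.d. codebooks of the error probability of
the threshold decoder is at most the right-hand side, so some codebook does at least as well. -/
theorem oneshot_random_coding (hV : IsChannel V) (hq1 : IsPMF q1) (hq2 : IsPMF q2)
    (ht1 : 0 < t1) (ht2 : 0 < t2) (ht12 : 0 < t12) {M1 M2 : ℕ} (hM1 : 0 < M1) (hM2 : 0 < M2) :
    ∃ (c1 : Fin M1 → X1) (c2 : Fin M2 → X2) (g : Y → Fin M1 × Fin M2),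
      (1 / ((M1 : ℝ) * M2)) * ∑ m1, ∑ m2, ∑ y,
        V (c1 m1) (c2 m2) y * (if g y = (m1, m2) then 0 else 1)
      ≤ ∑ x1, q1 x1 * ∑ x2, q2 x2 * missed V q1 q2 t1 t2 t12 x1 x2
        + (M1 - 1) / t1 + (M2 - 1) / t2 + (M1 - 1) * (M2 - 1) / t12 := by
  set R := ∑ x1, q1 x1 * ∑ x2, q2 x2 * missed V q1 q2 t1 t2 t12 x1 x2
        + (M1 - 1) / t1 + (M2 - 1) / t2 + (M1 - 1) * (M2 - 1) / t12 with hR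
  let e : (Fin M1 → X1) → (Fin M2 → X2) → Fin M1 → Fin M2 → ℝ := fun c1 c2 m1 m2 =>
    missed V q1 q2 t1 t2 t12 (c1 m1) (c2 m2)
          + ∑ m1' ∈ Finset.univ.erase m1,
              confuse V q1 q2 t1 t2 t12 (c1 m1) (c1 m1') (c2 m2) (c2 m2)
          + ∑ m2' ∈ Finset.univ.erase m2,
              confuse V q1 q2 t1 t2 t12 (c1 m1) (c1 m1) (c2 m2) (c2 m2')
          + ∑ m1' ∈ Finset.univ.erase m1, ∑ m2' ∈ Finset.univ.erase m2,
              confuse V q1 q2 t1 t2 t12 (c1 m1) (c1 m1') (c2 m2) (c2 m2')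
  have hcard1 : ∀ m : Fin M1, (((Finset.univ.erase m).card : ℕ) : ℝ) = M1 - 1 := by
    intro m
    rw [Finset.card_erase_of_mem (Finset.mem_univ _), Finset.card_univ, Fintype.card_fin,
      Nat.cast_pred hM1]
  have hcard2 : ∀ m : Fin M2, (((Finset.univ.erase m).card : ℕ) : ℝ) = M2 - 1 := by
    intro m
    rw [Finset.card_erase_of_mem (Finset.mem_univ _), Finset.card_univ, Fintype.card_fin,
      Nat.cast_pred hM2]
  -- ensemble average for a fixed message pair
  have he : ∀ m1 m2, iidE q1 M1 (fun c1 => iidE q2 M2 (fun c2 => e c1 c2 m1 m2)) ≤ R := by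
    intro m1 m2
    simp only [e]
    simp only [iidE_add, iidE_sum]
    have b0 : iidE q1 M1 (fun c1 => iidE q2 M2 fun c2 =>
        missed V q1 q2 t1 t2 t12 (c1 m1) (c2 m2))
        = ∑ x1, q1 x1 * ∑ x2, q2 x2 * missed V q1 q2 t1 t2 t12 x1 x2 := by
      have := fun c1 : Fin M1 → X1 =>
        iidE_coord hq2 M2 m2 (fun x2 => missed V q1 q2 t1 t2 t12 (c1 m1) x2)
      simp_rw [this]
      rw [iidE_coord hq1 M1 m1 (fun x1 => ∑ x2, q2 x2 * missed V q1 q2 t1 t2 t12 x1 x2)]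
    have b1 : ∀ m1' ∈ Finset.univ.erase m1, iidE q1 M1 (fun c1 => iidE q2 M2 fun c2 =>
        confuse V q1 q2 t1 t2 t12 (c1 m1) (c1 m1') (c2 m2) (c2 m2)) ≤ 1 / t1 := by
      intro m1' hm
      have hne : m1' ≠ m1 := (Finset.mem_erase.1 hm).1
      have := fun c1 : Fin M1 → X1 =>
        iidE_coord hq2 M2 m2 (fun x2 => confuse V q1 q2 t1 t2 t12 (c1 m1) (c1 m1') x2 x2)
      simp_rw [this]
      rw [iidE_coord2 hq1 M1 hne
        (fun x1' x1 => ∑ x2, q2 x2 * confuse V q1 q2 t1 t2 t12 x1 x1' x2 x2)]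
      refine pmf_avg_le hq1 fun x1' => ?_
      have hswap : ∑ x1, q1 x1 * ∑ x2, q2 x2 * confuse V q1 q2 t1 t2 t12 x1 x1' x2 x2
          = ∑ x2, q2 x2 * ∑ x1, q1 x1 * confuse V q1 q2 t1 t2 t12 x1 x1' x2 x2 := by
        simp_rw [Finset.mul_sum]
        rw [Finset.sum_comm]
        refine Finset.sum_congr rfl fun _ _ => Finset.sum_congr rfl fun _ _ => by ring
      rw [hswap]
      exact pmf_avg_le hq2 fun x2 => confuse1_le hV ht1 x1' x2
    have b2 : ∀ m2' ∈ Finset.univ.erase m2, iidE q1 M1 (fun c1 => iidE q2 M2 fun c2 =>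
        confuse V q1 q2 t1 t2 t12 (c1 m1) (c1 m1) (c2 m2) (c2 m2')) ≤ 1 / t2 := by
      intro m2' hm
      have hne : m2' ≠ m2 := (Finset.mem_erase.1 hm).1
      have := fun c1 : Fin M1 → X1 => iidE_coord2 hq2 M2 hne
        (fun x2' x2 => confuse V q1 q2 t1 t2 t12 (c1 m1) (c1 m1) x2 x2')
      simp_rw [this]
      rw [← iidE_const hq1 M1 (1 / t2)]
      refine iidE_mono hq1 M1 fun c1 => ?_
      exact pmf_avg_le hq2 fun x2' => confuse2_le hV ht2 (c1 m1) x2'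
    have b3 : ∀ m1' ∈ Finset.univ.erase m1, ∀ m2' ∈ Finset.univ.erase m2,
        iidE q1 M1 (fun c1 => iidE q2 M2 fun c2 =>
        confuse V q1 q2 t1 t2 t12 (c1 m1) (c1 m1') (c2 m2) (c2 m2')) ≤ 1 / t12 := by
      intro m1' hm1 m2' hm2
      have hne1 : m1' ≠ m1 := (Finset.mem_erase.1 hm1).1
      have hne2 : m2' ≠ m2 := (Finset.mem_erase.1 hm2).1
      have := fun c1 : Fin M1 → X1 => iidE_coord2 hq2 M2 hne2
        (fun x2' x2 => confuse V q1 q2 t1 t2 t12 (c1 m1) (c1 m1') x2 x2')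
      simp_rw [this]
      rw [iidE_coord2 hq1 M1 hne1 (fun x1' x1 =>
        ∑ x2', q2 x2' * ∑ x2, q2 x2 * confuse V q1 q2 t1 t2 t12 x1 x1' x2 x2')]
      refine pmf_avg_le hq1 fun x1' => ?_
      have hswap : ∑ x1, q1 x1 * ∑ x2', q2 x2' *
            ∑ x2, q2 x2 * confuse V q1 q2 t1 t2 t12 x1 x1' x2 x2'
          = ∑ x2', q2 x2' * ∑ x1, q1 x1 *
            ∑ x2, q2 x2 * confuse V q1 q2 t1 t2 t12 x1 x1' x2 x2' := by
        simp_rw [Finset.mul_sum (s := Finset.univ)]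
        rw [Finset.sum_comm]
        refine Finset.sum_congr rfl fun _ _ => Finset.sum_congr rfl fun _ _ =>
          Finset.sum_congr rfl fun _ _ => by ring
      rw [hswap]
      exact pmf_avg_le hq2 fun x2' => confuse12_le hV ht12 x1' x2'
    have s1 := Finset.sum_le_card_nsmul _ _ _ b1
    have s2 := Finset.sum_le_card_nsmul _ _ _ b2
    have s3 := Finset.sum_le_card_nsmul _ _ _
      fun m1' hm1 => Finset.sum_le_card_nsmul _ _ _ (b3 m1' hm1)
    rw [nsmul_eq_mul, hcard1, mul_one_div] at s1
    rw [nsmul_eq_mul, hcard2, mul_one_div] at s2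
    rw [nsmul_eq_mul, nsmul_eq_mul, hcard1, hcard2, mul_one_div, ← mul_div_assoc] at s3
    rw [b0, hR]
    linarith
  have hM : (0:ℝ) < (M1 : ℝ) * M2 := by positivity
  have hE : iidE q1 M1 (fun c1 => iidE q2 M2 (fun c2 =>
      (1 / ((M1 : ℝ) * M2)) * ∑ m1, ∑ m2, e c1 c2 m1 m2)) ≤ R := by
    simp only [iidE_const_mul, iidE_sum]
    calc _ ≤ (1 / ((M1 : ℝ) * M2)) * ∑ m1 : Fin M1, ∑ m2 : Fin M2, R := by
          gcongr with m1 _ m2 _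
          exact he m1 m2
      _ = R := by
          simp only [Finset.sum_const, Finset.card_univ, Fintype.card_fin, nsmul_eq_mul]
          field_simp
  obtain ⟨c1, h1⟩ := exists_le_of_iidE_le hq1 hE
  obtain ⟨c2, h2⟩ := exists_le_of_iidE_le hq2 h1
  obtain ⟨g, hg⟩ := exists_decoder (q1 := q1) (q2 := q2) (t1 := t1) (t2 := t2) (t12 := t12)
    hV hM1 hM2 c1 c2
  refine ⟨c1, c2, g, le_trans ?_ h2⟩
  gcongr with m1 _ m2 _
  exact hg m1 m2

end oneshot

/-! ### The memoryless product channel -/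

section product

/-- The `n`-fold memoryless extension of the channel `W`. -/
def prodW (W : X1 → X2 → Y → ℝ) (n : ℕ)
    (x1 : Fin n → X1) (x2 : Fin n → X2) (y : Fin n → Y) : ℝ :=
  ∏ i, W (x1 i) (x2 i) (y i)

/-- The `n`-fold product pmf. -/
def prodP {α : Type*} (p : α → ℝ) (n : ℕ) (x : Fin n → α) : ℝ := ∏ i, p (x i)

/-- The joint pmf of `(X₁, X₂, Y)` under independent inputs. -/
def jointP (W : X1 → X2 → Y → ℝ) (p1 : X1 → ℝ) (p2 : X2 → ℝ) (ω : X1 × X2 × Y) : ℝ :=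
  p1 ω.1 * p2 ω.2.1 * W ω.1 ω.2.1 ω.2.2

variable {W : X1 → X2 → Y → ℝ} {p1 : X1 → ℝ} {p2 : X2 → ℝ}

lemma sum_prod_eq_prod_sum {α : Type*} [Fintype α] (n : ℕ) (f : Fin n → α → ℝ) :
    ∑ x : Fin n → α, ∏ i, f i (x i) = ∏ i, ∑ a, f i a := by
  rw [Finset.prod_univ_sum, Fintype.piFinset_univ]

lemma isPMF_prodP {α : Type*} [Fintype α] {p : α → ℝ} (hp : IsPMF p) (n : ℕ) :
    IsPMF (prodP p n) :=
  ⟨fun _ => Finset.prod_nonneg fun _ _ => hp.1 _, sum_prod_pmf hp n⟩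

lemma isChannel_prodW (hW : IsChannel W) (n : ℕ) : IsChannel (prodW W n) := by
  refine ⟨fun _ _ _ => Finset.prod_nonneg fun _ _ => hW.1 _ _ _, fun x1 x2 => ?_⟩
  simp only [prodW]
  rw [sum_prod_eq_prod_sum n (fun i y => W (x1 i) (x2 i) y)]
  simp [hW.2]

lemma condOut2_prod (n : ℕ) (x2 : Fin n → X2) (y : Fin n → Y) :
    condOut2 (prodW W n) (prodP p1 n) x2 y = ∏ i, condOut2 W p1 (x2 i) (y i) := by
  simp only [condOut2, prodW, prodP, ← Finset.prod_mul_distrib]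
  rw [sum_prod_eq_prod_sum n (fun i x1 => p1 x1 * W x1 (x2 i) (y i))]

lemma condOut1_prod (n : ℕ) (x1 : Fin n → X1) (y : Fin n → Y) :
    condOut1 (prodW W n) (prodP p2 n) x1 y = ∏ i, condOut1 W p2 (x1 i) (y i) := by
  simp only [condOut1, prodW, prodP, ← Finset.prod_mul_distrib]
  rw [sum_prod_eq_prod_sum n (fun i x2 => p2 x2 * W (x1 i) x2 (y i))]

lemma outDist_eq_sum_condOut1 (W : X1 → X2 → Y → ℝ) (p1 : X1 → ℝ) (p2 : X2 → ℝ) (y : Y) :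
    outDist W p1 p2 y = ∑ x1, p1 x1 * condOut1 W p2 x1 y := by
  simp only [outDist, condOut1, Finset.mul_sum, mul_assoc]

lemma outDist_prod (n : ℕ) (y : Fin n → Y) :
    outDist (prodW W n) (prodP p1 n) (prodP p2 n) y = ∏ i, outDist W p1 p2 (y i) := by
  simp only [outDist_eq_sum_condOut1, condOut1_prod]
  simp only [prodP, ← Finset.prod_mul_distrib]
  rw [sum_prod_eq_prod_sum n (fun i x1 => p1 x1 * condOut1 W p2 x1 (y i))]

lemma sum_jointP_mul (F : X1 × X2 × Y → ℝ) :
    ∑ ω, jointP W p1 p2 ω * F ω = ∑ x1, ∑ x2, ∑ y, p1 x1 * p2 x2 * W x1 x2 y * F (x1, x2, y) := by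
  simp only [Fintype.sum_prod_type, jointP]

lemma isPMF_jointP (hW : IsChannel W) (hp1 : IsPMF p1) (hp2 : IsPMF p2) :
    IsPMF (jointP W p1 p2) := by
  refine ⟨fun ω => mul_nonneg (mul_nonneg (hp1.1 _) (hp2.1 _)) (hW.1 _ _ _), ?_⟩
  have := sum_jointP_mul (W := W) (p1 := p1) (p2 := p2) (fun _ => 1)
  simp only [mul_one] at this
  rw [this]
  simp only [← Finset.mul_sum, hW.2, mul_one, hp2.2, hp1.2]

/-- Under product inputs and the memoryless channel, the triples `(X₁ᵢ, X₂ᵢ, Yᵢ)` are i.i.d. -/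
lemma iidE_jointP (n : ℕ) (F : (Fin n → X1) → (Fin n → X2) → (Fin n → Y) → ℝ) :
    ∑ x1, prodP p1 n x1 * ∑ x2, prodP p2 n x2 * ∑ y, prodW W n x1 x2 y * F x1 x2 y
      = iidE (jointP W p1 p2) n
        (fun ω => F (fun i => (ω i).1) (fun i => (ω i).2.1) (fun i => (ω i).2.2)) := by
  unfold iidE
  rw [← (Equiv.arrowProdEquivProdArrow (Fin n) (fun _ => X1) (fun _ => X2 × Y)).symm.sum_comp,
    Fintype.sum_prod_type]
  refine Finset.sum_congr rfl fun x1 _ => ?_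
  rw [← (Equiv.arrowProdEquivProdArrow (Fin n) (fun _ => X2) (fun _ => Y)).symm.sum_comp,
    Fintype.sum_prod_type, Finset.mul_sum]
  refine Finset.sum_congr rfl fun x2 _ => ?_
  rw [Finset.mul_sum, Finset.mul_sum]
  refine Finset.sum_congr rfl fun y _ => ?_
  simp only [Equiv.arrowProdEquivProdArrow, Equiv.coe_fn_symm_mk, jointP, prodP, prodW,
    Finset.prod_mul_distrib]
  ring

lemma sum_logb_le {n : ℕ} {w Q : Fin n → ℝ} (hw : ∀ i, 0 < w i) (hQ : ∀ i, 0 < Q i) {t : ℝ}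
    (h : ¬ t * ∏ i, Q i < ∏ i, w i) : ∑ i, Real.logb 2 (w i / Q i) ≤ Real.logb 2 t := by
  have hQ' : 0 < ∏ i, Q i := Finset.prod_pos fun i _ => hQ i
  have hw' : 0 < ∏ i, w i := Finset.prod_pos fun i _ => hw i
  rw [← Real.logb_prod _ _ fun i _ => (div_pos (hw i) (hQ i)).ne', Finset.prod_div_distrib]
  refine Real.logb_le_logb_of_le (by norm_num) (by positivity) ?_
  rw [div_le_iff₀ hQ']
  exact not_lt.1 h

/-- Union bound for the event that the transmitted pair fails the test, in terms of the sums of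
information densities. On the support of the joint pmf all the probabilities inside the logarithms
are positive. -/
lemma missed_le (hW : IsChannel W) (hp1 : IsPMF p1) (hp2 : IsPMF p2) (n : ℕ) (t1 t2 t12 : ℝ) :
    ∑ x1, prodP p1 n x1 * ∑ x2, prodP p2 n x2 *
        missed (prodW W n) (prodP p1 n) (prodP p2 n) t1 t2 t12 x1 x2
      ≤ iidE (jointP W p1 p2) n
          (fun ω => if ∑ i, iDens W p1 p2 (ω i).1 (ω i).2.1 (ω i).2.2 ≤ Real.logb 2 t12
            then 1 else 0)
        + iidE (jointP W p1 p2) n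
          (fun ω => if ∑ i, iDensC1 W p1 (ω i).1 (ω i).2.1 (ω i).2.2 ≤ Real.logb 2 t1
            then 1 else 0)
        + iidE (jointP W p1 p2) n
          (fun ω => if ∑ i, iDensC2 W p2 (ω i).1 (ω i).2.1 (ω i).2.2 ≤ Real.logb 2 t2
            then 1 else 0) := by
  simp only [missed]
  rw [iidE_jointP n (fun x1 x2 y => if passes (prodW W n) (prodP p1 n) (prodP p2 n) t1 t2 t12
    x1 x2 y then 0 else 1), ← iidE_add, ← iidE_add]
  have hJ := isPMF_jointP hW hp1 hp2
  refine Finset.sum_le_sum fun ω _ => ?_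
  rcases (Finset.prod_nonneg fun i (_ : i ∈ Finset.univ) => hJ.1 (ω i)).eq_or_lt with h0 | h0
  · rw [← h0, zero_mul, zero_mul]
  refine mul_le_mul_of_nonneg_left ?_ h0.le
  have hpos : ∀ i, 0 < p1 (ω i).1 ∧ 0 < p2 (ω i).2.1 ∧ 0 < W (ω i).1 (ω i).2.1 (ω i).2.2 := by
    intro i
    have hne : jointP W p1 p2 (ω i) ≠ 0 := fun h =>
      h0.ne' (Finset.prod_eq_zero (Finset.mem_univ i) h)
    simp only [jointP, mul_ne_zero_iff] at hne
    exact ⟨lt_of_le_of_ne (hp1.1 _) hne.1.1.symm, lt_of_le_of_ne (hp2.1 _) hne.1.2.symm,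
      lt_of_le_of_ne (hW.1 _ _ _) hne.2.symm⟩
  have hw : ∀ i, 0 < W (ω i).1 (ω i).2.1 (ω i).2.2 := fun i => (hpos i).2.2
  have hc2 : ∀ i, 0 < condOut2 W p1 (ω i).2.1 (ω i).2.2 := by
    intro i
    refine lt_of_lt_of_le (mul_pos (hpos i).1 (hpos i).2.2)
      (Finset.single_le_sum (f := fun x1 => p1 x1 * W x1 (ω i).2.1 (ω i).2.2)
      (fun x _ => mul_nonneg (hp1.1 x) (hW.1 _ _ _)) (Finset.mem_univ (ω i).1))
  have hc1 : ∀ i, 0 < condOut1 W p2 (ω i).1 (ω i).2.2 := by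
    intro i
    refine lt_of_lt_of_le (mul_pos (hpos i).2.1 (hpos i).2.2)
      (Finset.single_le_sum (f := fun x2 => p2 x2 * W (ω i).1 x2 (ω i).2.2)
      (fun x _ => mul_nonneg (hp2.1 x) (hW.1 _ _ _)) (Finset.mem_univ (ω i).2.1))
  have ho : ∀ i, 0 < outDist W p1 p2 (ω i).2.2 := by
    intro i
    rw [outDist_eq_sum_condOut1]
    refine lt_of_lt_of_le (mul_pos (hpos i).1 (hc1 i))
      (Finset.single_le_sum (f := fun x1 => p1 x1 * condOut1 W p2 x1 (ω i).2.2)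
      (fun x _ => mul_nonneg (hp1.1 x) ?_) (Finset.mem_univ (ω i).1))
    exact Finset.sum_nonneg fun _ _ => mul_nonneg (hp2.1 _) (hW.1 _ _ _)
  have ind : ∀ p : Prop, (0:ℝ) ≤ if p then 1 else 0 := fun p => by split_ifs <;> norm_num
  beta_reduce
  by_cases hpass : passes (prodW W n) (prodP p1 n) (prodP p2 n) t1 t2 t12
      (fun i => (ω i).1) (fun i => (ω i).2.1) (fun i => (ω i).2.2)
  · rw [if_pos hpass]
    exact add_nonneg (add_nonneg (ind _) (ind _)) (ind _)
  · rw [if_neg hpass]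
    simp only [passes, condOut2_prod, condOut1_prod, outDist_prod, not_and_or] at hpass
    rcases hpass with h | h | h
    · have h' : ∑ i, iDensC1 W p1 (ω i).1 (ω i).2.1 (ω i).2.2 ≤ Real.logb 2 t1 :=
        sum_logb_le hw hc2 h
      rw [if_pos h']
      exact le_add_of_le_of_nonneg (le_add_of_nonneg_left (ind _)) (ind _)
    · have h' : ∑ i, iDensC2 W p2 (ω i).1 (ω i).2.1 (ω i).2.2 ≤ Real.logb 2 t2 :=
        sum_logb_le hw hc1 h
      rw [if_pos h']
      exact le_add_of_nonneg_left (add_nonneg (ind _) (ind _))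
    · have h' : ∑ i, iDens W p1 p2 (ω i).1 (ω i).2.1 (ω i).2.2 ≤ Real.logb 2 t12 :=
        sum_logb_le hw ho h
      rw [if_pos h']
      exact le_add_of_le_of_nonneg (le_add_of_nonneg_right (ind _)) (ind _)

lemma Isum_eq : Isum W p1 p2 = ∑ ω, jointP W p1 p2 ω * iDens W p1 p2 ω.1 ω.2.1 ω.2.2 := by
  rw [sum_jointP_mul]
  simp only [Isum, iBar, Finset.mul_sum, mul_assoc]

lemma Icond1_eq : Icond1 W p1 p2 = ∑ ω, jointP W p1 p2 ω * iDensC1 W p1 ω.1 ω.2.1 ω.2.2 := by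
  rw [sum_jointP_mul]; rfl

lemma Icond2_eq : Icond2 W p1 p2 = ∑ ω, jointP W p1 p2 ω * iDensC2 W p2 ω.1 ω.2.1 ω.2.2 := by
  rw [sum_jointP_mul]; rfl

lemma VarTot_eq : VarTot W p1 p2
    = ∑ ω, jointP W p1 p2 ω * (iDens W p1 p2 ω.1 ω.2.1 ω.2.2 - Isum W p1 p2) ^ 2 := by
  rw [sum_jointP_mul]; rfl

/-- Law of total variance: `V₁ + V₂ = Var(i(X₁,X₂;Y))`. -/
lemma Vone_add_Vtwo (hW : IsChannel W) : Vone W p1 p2 + Vtwo W p1 p2 = VarTot W p1 p2 := by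
  simp only [Vone, Vtwo, VarTot, ← Finset.sum_add_distrib]
  refine Finset.sum_congr rfl fun x1 _ => Finset.sum_congr rfl fun x2 _ => ?_
  set b := iBar W p1 p2 x1 x2 with hb
  set I := Isum W p1 p2
  have h1 : ∑ y, W x1 x2 y * (iDens W p1 p2 x1 x2 y - b) = 0 := by
    simp only [mul_sub, Finset.sum_sub_distrib, ← Finset.sum_mul, hW.2, one_mul]
    rw [hb, iBar, sub_self]
  have h2 : ∀ y, p1 x1 * p2 x2 * W x1 x2 y * (iDens W p1 p2 x1 x2 y - I) ^ 2
      = p1 x1 * p2 x2 * W x1 x2 y * (iDens W p1 p2 x1 x2 y - b) ^ 2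
        + (p1 x1 * p2 x2 * (b - I) ^ 2 * W x1 x2 y
        + p1 x1 * p2 x2 * (2 * (b - I)) * (W x1 x2 y * (iDens W p1 p2 x1 x2 y - b))) := by
    intro y; ring
  simp only [h2, Finset.sum_add_distrib, ← Finset.mul_sum, h1, hW.2]
  ring

/-- A code with error at most `ε` has at most `|𝒴|^n / (1 - ε)` message pairs; boundedness is what
makes the supremum defining `Rsum` meaningful. -/
lemma rate_set_bddAbove (hW : IsChannel W) {ε : ℝ} (hε : ε < 1) (n K : ℕ) :
    BddAbove {r | ∃ M1 M2 : ℕ, 0 < M1 ∧ 0 < M2 ∧ ExistsCode W n M1 M2 K ε ∧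
      r = Real.logb 2 ((M1 : ℝ) * M2) / n} := by
  refine ⟨Real.logb 2 (Fintype.card (Fin n → Y) / (1 - ε)) / n, ?_⟩
  rintro r ⟨M1, M2, h1, h2, ⟨e, f1, f2, g, he⟩, rfl⟩
  have hM : (0:ℝ) < (M1 : ℝ) * M2 := by positivity
  refine div_le_div_of_nonneg_right ?_ (Nat.cast_nonneg n)
  refine Real.logb_le_logb_of_le (by norm_num) hM ?_
  rw [le_div_iff₀ (by linarith)]
  unfold avgErr at he
  have hw : ∀ m1 m2, ∑ y : Fin n → Y, ∏ i, W (f1 m1 (e m1 m2) i) (f2 m2 (e m1 m2) i) (y i) = 1 :=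
    fun m1 m2 => (isChannel_prodW hW n).2 _ _
  have hle : ∀ m1 m2, ∀ y : Fin n → Y,
      ∏ i, W (f1 m1 (e m1 m2) i) (f2 m2 (e m1 m2) i) (y i) ≤ 1 := by
    intro m1 m2 y
    rw [← hw m1 m2]
    exact Finset.single_le_sum
      (f := fun y : Fin n → Y => ∏ i, W (f1 m1 (e m1 m2) i) (f2 m2 (e m1 m2) i) (y i))
      (fun y _ => (isChannel_prodW hW n).1 _ _ y) (Finset.mem_univ y)
  -- each output is decoded to a single message pair
  have key : (M1 : ℝ) * M2 - ∑ m1, ∑ m2, ∑ y : Fin n → Y,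
      (∏ i, W (f1 m1 (e m1 m2) i) (f2 m2 (e m1 m2) i) (y i)) *
        (if g y = (m1, m2) then 0 else 1) ≤ Fintype.card (Fin n → Y) := by
    have h3 : (M1 : ℝ) * M2 = ∑ m1 : Fin M1, ∑ m2 : Fin M2, ∑ y : Fin n → Y,
        ∏ i, W (f1 m1 (e m1 m2) i) (f2 m2 (e m1 m2) i) (y i) := by
      simp [hw]
    rw [h3]
    simp only [← Finset.sum_sub_distrib]
    calc _ ≤ ∑ m1, ∑ m2, ∑ y : Fin n → Y, (if g y = (m1, m2) then (1:ℝ) else 0) := by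
          refine Finset.sum_le_sum fun m1 _ => Finset.sum_le_sum fun m2 _ =>
            Finset.sum_le_sum fun y _ => ?_
          have := hle m1 m2 y
          split_ifs <;> linarith
      _ = ∑ y : Fin n → Y, ∑ m : Fin M1 × Fin M2, (if g y = m then (1:ℝ) else 0) := by
          rw [Finset.sum_comm (s := (Finset.univ : Finset (Fin n → Y))), Fintype.sum_prod_type]
      _ = _ := by simp
  rw [one_div, inv_mul_le_iff₀ hM] at he
  linarith

lemma Rsum_ge {n M1 M2 : ℕ} {ε : ℝ} (hW : IsChannel W) (hε : ε < 1) (h1 : 0 < M1) (h2 : 0 < M2)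
    (h : ExistsCode W n M1 M2 1 ε) : Real.logb 2 ((M1 : ℝ) * M2) / n ≤ Rsum W n ε 1 :=
  le_csSup (rate_set_bddAbove hW hε n 1) ⟨M1, M2, h1, h2, h, rfl⟩

lemma Rsum_nonneg (hW : IsChannel W) (hp1 : IsPMF p1) (hp2 : IsPMF p2) {ε : ℝ} (h0 : 0 ≤ ε)
    (hε : ε < 1) (n : ℕ) : 0 ≤ Rsum W n ε 1 := by
  have a1 : Nonempty X1 := by
    by_contra h
    rw [not_nonempty_iff] at h
    simpa using hp1.2
  have a2 : Nonempty X2 := by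
    by_contra h
    rw [not_nonempty_iff] at h
    simpa using hp2.2
  have := Rsum_ge (n := n) (M1 := 1) (M2 := 1) (ε := ε) hW hε one_pos one_pos
    ⟨fun _ _ => 0, fun _ _ _ => a1.some, fun _ _ _ => a2.some, fun _ => (0, 0), by
      simpa [avgErr, Subsingleton.elim _ (0 : Fin 1)] using h0⟩
  simpa using this

/-- Random coding with message sets of sizes `⌈2^a⌉`, `⌈2^b⌉` and thresholds `2^a √n`, `2^b √n`,
`2^(a+b) √n`: each of the three confusion terms is then at most `1 / √n`. -/
lemma Rsum_ge_of_bound (hW : IsChannel W) (hp1 : IsPMF p1) (hp2 : IsPMF p2) {ε : ℝ} (hε : ε < 1)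
    {n : ℕ} (hn : 0 < n) (a b : ℝ)
    (h : iidE (jointP W p1 p2) n
          (fun ω => if ∑ i, iDens W p1 p2 (ω i).1 (ω i).2.1 (ω i).2.2
            ≤ a + b + Real.logb 2 n / 2 then 1 else 0)
        + iidE (jointP W p1 p2) n
          (fun ω => if ∑ i, iDensC1 W p1 (ω i).1 (ω i).2.1 (ω i).2.2
            ≤ a + Real.logb 2 n / 2 then 1 else 0)
        + iidE (jointP W p1 p2) n
          (fun ω => if ∑ i, iDensC2 W p2 (ω i).1 (ω i).2.1 (ω i).2.2
            ≤ b + Real.logb 2 n / 2 then 1 else 0)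
        + 3 / Real.sqrt n ≤ ε) :
    (a + b) / n ≤ Rsum W n ε 1 := by
  have hn' : (0:ℝ) < n := by exact_mod_cast hn
  set r := Real.sqrt n with hr
  have hr0 : 0 < r := Real.sqrt_pos.2 hn'
  have two : ∀ c : ℝ, (0:ℝ) < (2:ℝ) ^ c := fun c => Real.rpow_pos_of_pos (by norm_num) c
  have hlog : ∀ c : ℝ, Real.logb 2 ((2:ℝ) ^ c * r) = c + Real.logb 2 n / 2 := by
    intro c
    rw [Real.logb_mul (two c).ne' hr0.ne', Real.logb_rpow (by norm_num) (by norm_num), hr,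
      Real.sqrt_eq_rpow, Real.logb_rpow_eq_mul_logb_of_pos hn']
    ring
  set M1 := ⌈(2:ℝ) ^ a⌉₊ with hM1
  set M2 := ⌈(2:ℝ) ^ b⌉₊ with hM2
  have m1 : 0 < M1 := Nat.ceil_pos.2 (two a)
  have m2 : 0 < M2 := Nat.ceil_pos.2 (two b)
  have l1 : (M1 : ℝ) - 1 ≤ (2:ℝ) ^ a := by linarith [Nat.ceil_lt_add_one (two a).le]
  have l2 : (M2 : ℝ) - 1 ≤ (2:ℝ) ^ b := by linarith [Nat.ceil_lt_add_one (two b).le]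
  have k2 : (0:ℝ) ≤ (M2 : ℝ) - 1 := by
    have : (1:ℝ) ≤ M2 := by exact_mod_cast m2
    linarith
  have hcode : ExistsCode W n M1 M2 1 ε := by
    obtain ⟨c1, c2, g, hg⟩ := oneshot_random_coding (isChannel_prodW hW n) (isPMF_prodP hp1 n)
      (isPMF_prodP hp2 n) (mul_pos (two a) hr0) (mul_pos (two b) hr0) (mul_pos (two (a + b)) hr0)
      m1 m2
    refine ⟨fun _ _ => 0, fun m _ => c1 m, fun m _ => c2 m, g, hg.trans ?_⟩
    have hmiss := missed_le hW hp1 hp2 n ((2:ℝ) ^ a * r) ((2:ℝ) ^ b * r) ((2:ℝ) ^ (a + b) * r)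
    simp only [hlog] at hmiss
    have u1 : ((M1 : ℝ) - 1) / ((2:ℝ) ^ a * r) ≤ 1 / r := by
      rw [div_le_div_iff₀ (mul_pos (two a) hr0) hr0]; nlinarith
    have u2 : ((M2 : ℝ) - 1) / ((2:ℝ) ^ b * r) ≤ 1 / r := by
      rw [div_le_div_iff₀ (mul_pos (two b) hr0) hr0]; nlinarith
    have u3 : ((M1 : ℝ) - 1) * ((M2 : ℝ) - 1) / ((2:ℝ) ^ (a + b) * r) ≤ 1 / r := by
      rw [div_le_div_iff₀ (mul_pos (two _) hr0) hr0, Real.rpow_add (by norm_num)]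
      have := mul_le_mul l1 l2 k2 (two a).le
      nlinarith
    have h3 : 3 / r = 1 / r + 1 / r + 1 / r := by ring
    linarith
  refine le_trans ?_ (Rsum_ge hW hε m1 m2 hcode)
  refine div_le_div_of_nonneg_right ?_ hn'.le
  rw [Real.le_logb_iff_rpow_le (by norm_num) (by positivity), Real.rpow_add (by norm_num)]
  exact mul_le_mul (Nat.le_ceil _) (Nat.le_ceil _) (two b).le (Nat.cast_nonneg _)

end product

/-! ### Second-order choice of the rates -/

section assembly

lemma continuous_stdNormCDF : Continuous stdNormCDF :=
  continuous_iff_continuousAt.2 fun x => (hasDerivAt_stdNormCDF x).continuousAt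

/-- `Φ⁻¹` is defined as a supremum over a nonempty, bounded, closed set, so the supremum is
attained. -/
lemma stdNormCDF_inv_le {ε : ℝ} (h0 : 0 < ε) (h1 : ε < 1) :
    stdNormCDF (stdNormCDFinv ε) ≤ ε := by
  have hfun : stdNormCDF = fun x => ProbabilityTheory.cdf (ProbabilityTheory.gaussianReal 0 1) x :=
    funext fun x => stdNormCDF_eq_cdf x
  have hbot : Filter.Tendsto stdNormCDF Filter.atBot (nhds 0) := by
    rw [hfun]; exact ProbabilityTheory.tendsto_cdf_atBot _
  have htop : Filter.Tendsto stdNormCDF Filter.atTop (nhds 1) := by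
    rw [hfun]; exact ProbabilityTheory.tendsto_cdf_atTop _
  have hne : {x | stdNormCDF x ≤ ε}.Nonempty := by
    obtain ⟨x, hx⟩ := (hbot.eventually_lt_const h0).exists
    exact ⟨x, hx.le⟩
  have hbdd : BddAbove {x | stdNormCDF x ≤ ε} := by
    obtain ⟨x, hx⟩ := (htop.eventually_const_lt h1).exists
    refine ⟨x, fun y hy => ?_⟩
    by_contra hlt
    exact absurd (stdNormCDF_mono (not_le.1 hlt).le) (not_le.2 (lt_of_le_of_lt hy hx))
  exact (isClosed_le continuous_stdNormCDF continuous_const).csSup_mem hne hbdd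

/-- On the compact interval `[q - 1, q]` the Gaussian density is bounded below, so `Φ` decreases
at least linearly when moving left from `q`. -/
lemma stdNormCDF_sub_le (q : ℝ) :
    ∃ κ > 0, ∀ d, 0 ≤ d → d ≤ 1 → stdNormCDF (q - d) ≤ stdNormCDF q - κ * d := by
  obtain ⟨z, -, hz⟩ := (isCompact_Icc (a := q - 1) (b := q)).exists_isMinOn
    (Set.nonempty_Icc.2 (by linarith)) continuous_gaussDens.continuousOn
  refine ⟨gaussDens z, gaussDens_pos z, fun d hd0 hd1 => ?_⟩
  have := (convex_Icc (q - 1) q).mul_sub_le_image_sub_of_le_deriv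
    (f := stdNormCDF) (C := gaussDens z) continuous_stdNormCDF.continuousOn
    (fun x _ => (hasDerivAt_stdNormCDF x).differentiableAt.differentiableWithinAt)
    (fun x hx => by
      rw [(hasDerivAt_stdNormCDF x).deriv]
      exact hz (interior_subset hx)) (q - d) ⟨by linarith, by linarith⟩ q ⟨by linarith, le_rfl⟩
    (by linarith)
  linarith

/-- Chebyshev's inequality for a sum whose threshold lies linearly far below its mean. -/
lemma iidE_far_below_mean {Ω : Type*} [Fintype Ω] {P : Ω → ℝ} (hP : IsPMF P) (f : Ω → ℝ)
    {m η : ℝ} (hm : m = ∑ x, P x * f x) (hη : 0 < η) {n : ℕ} (hn : 1 ≤ n) {T : ℝ}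
    (hT : T ≤ n * m - n * (η / 2)) :
    iidE P n (fun ω => if ∑ i, f (ω i) ≤ T then 1 else 0)
      ≤ 4 * (∑ x, P x * (f x - m) ^ 2) / η ^ 2 / Real.sqrt n := by
  have hn1 : (1:ℝ) ≤ n := by exact_mod_cast hn
  have hn0 : (0:ℝ) < n := by linarith
  have hu : ∑ x, P x * (f x - m) = 0 := by
    simp only [mul_sub, Finset.sum_sub_distrib, ← Finset.sum_mul, hP.2, one_mul]
    rw [hm, sub_self]
  set S := ∑ x, P x * (f x - m) ^ 2 with hS
  have hS0 : 0 ≤ S := Finset.sum_nonneg fun x _ => mul_nonneg (hP.1 x) (sq_nonneg _)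
  calc _ ≤ iidE P n (fun ω => if ∑ i, (f (ω i) - m) ≤ -(n * (η / 2)) then 1 else 0) := by
        refine Finset.sum_le_sum fun ω _ => mul_le_mul_of_nonneg_left ?_
          (Finset.prod_nonneg fun i _ => hP.1 _)
        beta_reduce
        have : ∑ i, (f (ω i) - m) = ∑ i, f (ω i) - n * m := by simp [Finset.sum_sub_distrib]
        rw [this]
        split_ifs <;> linarith
    _ ≤ n * S / (n * (η / 2)) ^ 2 := iidE_chebyshev hP hu n (by positivity)
    _ = 4 * S / η ^ 2 / n := by field_simp; ring
    _ ≤ _ := by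
        refine div_le_div_of_nonneg_left (by positivity) (Real.sqrt_pos.2 hn0) ?_
        exact (Real.sqrt_le_left hn0.le).2 (by nlinarith)

lemma logb_two_le_four_sqrt {n : ℕ} (hn : 1 ≤ n) : Real.logb 2 n ≤ 4 * Real.sqrt n := by
  have hn0 : (0:ℝ) < n := by exact_mod_cast hn
  have hr := Real.sqrt_pos.2 hn0
  have h1 : Real.log n ≤ 2 * Real.sqrt n := by
    have := Real.log_le_sub_one_of_pos hr
    rw [Real.log_sqrt hn0.le] at this
    linarith
  have h2 := Real.log_two_gt_d9
  rw [Real.logb, div_le_iff₀ (by linarith)]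
  nlinarith

end assembly

set_option maxHeartbeats 1000000 in
/-- **no cooperation, `K = 1`.** Fix a discrete memoryless MAC,
`ε ∈ (0,1)`, and a sum-capacity-achieving product pmf `p₁·p₂ ∈ 𝒫*` with `V₂ > 0` and
`I(X₁;Y|X₂) + I(X₂;Y|X₁) > I(X₁,X₂;Y)`.  Then `V₁ + V₂ = Var(i(X₁,X₂;Y))`, and there is a
constant `c` such that for all `n ≥ 2`:
`R_sum(n,ε,1) ≥ C_sum + √((V₁+V₂)/n)·Φ⁻¹(ε) − c·(log n)/n`. -/
theorem sum_rate_no_cooperation_second_order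
    (W : X1 → X2 → Y → ℝ) (p1 : X1 → ℝ) (p2 : X2 → ℝ)
    (hW : IsChannel W) (hp1 : IsPMF p1) (hp2 : IsPMF p2)
    (ε : ℝ) (hε : ε ∈ Set.Ioo (0 : ℝ) 1)
    (hopt : Isum W p1 p2 = Csum W)
    (hV2 : 0 < Vtwo W p1 p2)
    (hI : Isum W p1 p2 < Icond1 W p1 p2 + Icond2 W p1 p2) :
    Vone W p1 p2 + Vtwo W p1 p2 = VarTot W p1 p2 ∧
    ∃ c : ℝ, ∀ n : ℕ, 2 ≤ n →
      Csum W + Real.sqrt ((Vone W p1 p2 + Vtwo W p1 p2) / n) * stdNormCDFinv ε -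
          c * Real.log n / n ≤
        Rsum W n ε 1 := by
  refine ⟨Vone_add_Vtwo hW, ?_⟩
  have hVpos : 0 < VarTot W p1 p2 := by
    have : 0 ≤ Vone W p1 p2 := Finset.sum_nonneg fun _ _ => Finset.sum_nonneg fun _ _ =>
      mul_nonneg (mul_nonneg (hp1.1 _) (hp2.1 _)) (sq_nonneg _)
    linarith [Vone_add_Vtwo (p1 := p1) (p2 := p2) hW]
  rw [Vone_add_Vtwo hW, ← hopt]
  have hJ := isPMF_jointP hW hp1 hp2
  have hI0 := Isum_eq (W := W) (p1 := p1) (p2 := p2)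
  have hV := VarTot_eq (W := W) (p1 := p1) (p2 := p2)
  have hC1 := Icond1_eq (W := W) (p1 := p1) (p2 := p2)
  have hC2 := Icond2_eq (W := W) (p1 := p1) (p2 := p2)
  set J := jointP W p1 p2 with hJdef
  set I := Isum W p1 p2 with hIdef
  set I1 := Icond1 W p1 p2 with hI1def
  set I2 := Icond2 W p1 p2 with hI2def
  set V := VarTot W p1 p2 with hVdef
  set q := stdNormCDFinv ε with hq
  set s := Real.sqrt V with hs
  have hs0 : 0 < s := Real.sqrt_pos.2 hVpos
  have hΦq : stdNormCDF q ≤ ε := stdNormCDF_inv_le hε.1 hε.2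
  clear_value J I I1 I2 V q s
  obtain ⟨κ, hκ, hκd⟩ := stdNormCDF_sub_le q
  have hmean : ∑ ω, J ω * (iDens W p1 p2 ω.1 ω.2.1 ω.2.2 - I) = 0 := by
    simp only [mul_sub, Finset.sum_sub_distrib, ← Finset.sum_mul, hJ.2, one_mul]
    rw [hI0, sub_self]
  obtain ⟨B, hB0, hB⟩ := berry_esseen_upper hJ hmean hs0
    (by rw [hs, Real.sq_sqrt hVpos.le, hV])
  set S1 := ∑ ω, J ω * (iDensC1 W p1 ω.1 ω.2.1 ω.2.2 - I1) ^ 2 with hS1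
  set S2 := ∑ ω, J ω * (iDensC2 W p2 ω.1 ω.2.1 ω.2.2 - I2) ^ 2 with hS2
  have hS1n : 0 ≤ S1 := Finset.sum_nonneg fun x _ => mul_nonneg (hJ.1 x) (sq_nonneg _)
  have hS2n : 0 ≤ S2 := Finset.sum_nonneg fun x _ => mul_nonneg (hJ.1 x) (sq_nonneg _)
  obtain ⟨η, hη⟩ : ∃ η, η = (I1 + I2 - I) / 2 := ⟨_, rfl⟩
  have hη0 : 0 < η := by rw [hη]; linarith
  have hT1 := fun (n : ℕ) (hn : 1 ≤ n) (T : ℝ) => iidE_far_below_mean hJ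
    (fun ω : X1 × X2 × Y => iDensC1 W p1 ω.1 ω.2.1 ω.2.2) (m := I1) hC1 hη0 hn (T := T)
  have hT2 := fun (n : ℕ) (hn : 1 ≤ n) (T : ℝ) => iidE_far_below_mean hJ
    (fun ω : X1 × X2 × Y => iDensC2 W p2 ω.1 ω.2.1 ω.2.2) (m := I2) hC2 hη0 hn (T := T)
  beta_reduce at hT1 hT2
  simp only [← hS1] at hT1
  simp only [← hS2] at hT2
  clear_value S1 S2
  -- `Btot` collects every `O(1 / √n)` term of the error probability; backing off by `A / √n` in
  -- the argument of `Φ` compensates it exactly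
  obtain ⟨Btot, hBtot⟩ : ∃ Btot, Btot = B + 4 * S1 / η ^ 2 + 4 * S2 / η ^ 2 + 3 := ⟨_, rfl⟩
  have hBtot0 : 0 < Btot := by rw [hBtot]; positivity
  obtain ⟨A, hA⟩ : ∃ A, A = Btot / κ := ⟨_, rfl⟩
  have hA0 : 0 < A := by rw [hA]; positivity
  obtain ⟨R0, hR0⟩ : ∃ R0, R0 = 1 + A + (s * |q| + 2) / η := ⟨_, rfl⟩
  have hR0pos : 0 < R0 := by rw [hR0]; positivity
  have hl2 : 0 < Real.log 2 := Real.log_pos (by norm_num)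
  obtain ⟨c1, hc1⟩ : ∃ c1, c1 = s * A / Real.log 2 + 1 / Real.log 2 := ⟨_, rfl⟩
  obtain ⟨c2, hc2⟩ : ∃ c2, c2 = (|I| + s * |q|) * R0 ^ 2 / Real.log 2 := ⟨_, rfl⟩
  have hc10 : 0 ≤ c1 := by rw [hc1]; positivity
  have hc20 : 0 ≤ c2 := by rw [hc2]; positivity
  refine ⟨c1 + c2, fun n hn => ?_⟩
  have hn2 : (2:ℝ) ≤ n := by exact_mod_cast hn
  have hn0 : (0:ℝ) < n := by linarith
  obtain ⟨r, hr⟩ : ∃ r, r = Real.sqrt n := ⟨_, rfl⟩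
  have hrr : r * r = n := by rw [hr]; exact Real.mul_self_sqrt hn0.le
  have hr0 : 0 < r := by rw [hr]; exact Real.sqrt_pos.2 hn0
  have hr1 : 1 ≤ r := by nlinarith
  have hlogn : Real.log 2 ≤ Real.log n := Real.log_le_log (by norm_num) hn2
  have hVn : Real.sqrt (V / n) = s / r := by rw [Real.sqrt_div hVpos.le, hr, hs]
  rw [hVn]
  rcases lt_or_ge r R0 with hsmall | hbig
  · -- for bounded `n` the term `c₂ log n / n` makes the bound trivial
    refine le_trans ?_ (Rsum_nonneg hW hp1 hp2 hε.1.le hε.2 n)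
    have h1 : s / r * q ≤ s * |q| :=
      calc s / r * q ≤ s / r * |q| := by gcongr; exact le_abs_self q
        _ ≤ s * |q| := by gcongr; exact div_le_self hs0.le hr1
    have h2 : |I| + s * |q| ≤ (c1 + c2) * Real.log n / n := by
      rw [le_div_iff₀ hn0]
      have e1 : (|I| + s * |q|) * n ≤ (|I| + s * |q|) * R0 ^ 2 := by
        gcongr; nlinarith
      have e2 : (|I| + s * |q|) * R0 ^ 2 = c2 * Real.log 2 := by rw [hc2]; field_simp
      have e3 : c2 * Real.log 2 ≤ (c1 + c2) * Real.log n := by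
        apply mul_le_mul <;> linarith
      linarith
    linarith [le_abs_self I]
  · have hlog4 : Real.logb 2 n ≤ 4 * r := by rw [hr]; exact logb_two_le_four_sqrt (by omega)
    have hlogb : Real.logb 2 n = Real.log n / Real.log 2 := rfl
    obtain ⟨ℓ, hℓ⟩ : ∃ ℓ, ℓ = Real.logb 2 n := ⟨_, rfl⟩
    obtain ⟨x, hx⟩ : ∃ x, x = q - A / r := ⟨_, rfl⟩
    obtain ⟨L, hL⟩ : ∃ L, L = n * I + s * r * x - ℓ / 2 := ⟨_, rfl⟩
    have hAr : 0 ≤ A / r := by positivity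
    have hAr1 : A / r ≤ 1 := by
      rw [div_le_one hr0]
      have : 0 ≤ (s * |q| + 2) / η := by positivity
      linarith
    -- the slack in both individual-rate constraints is linear in `n`
    have hslack : s * r * x / 2 + ℓ / 4 ≤ n * (η / 2) := by
      have e1 : s * r * x ≤ s * r * |q| := by
        gcongr; linarith [le_abs_self q]
      have e2 : s * |q| + 2 ≤ r * η := by
        rw [← div_le_iff₀ hη0]; linarith
      have e3 : (s * |q| + 2) * r ≤ r * η * r := by gcongr
      rw [← hℓ] at hlog4
      nlinarith
    have key := Rsum_ge_of_bound hW hp1 hp2 hε.2 (n := n) (by omega)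
      ((L + n * (I1 - I2)) / 2) ((L - n * (I1 - I2)) / 2) (by
        rw [← hJdef, ← hℓ, ← hr]
        have t12 : iidE J n (fun ω => if ∑ i, iDens W p1 p2 (ω i).1 (ω i).2.1 (ω i).2.2
            ≤ (L + n * (I1 - I2)) / 2 + (L - n * (I1 - I2)) / 2 + ℓ / 2 then 1 else 0)
            ≤ stdNormCDF x + B / r := by
          have := hB n (by omega) x
          rw [← hr] at this
          refine le_trans (le_of_eq ?_) this
          refine congrArg (iidE J n) (funext fun ω => ?_)
          refine if_congr ?_ rfl rfl
          rw [Finset.sum_sub_distrib]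
          simp only [Finset.sum_const, Finset.card_univ, Fintype.card_fin, nsmul_eq_mul]
          rw [hL]
          constructor <;> intro h <;> linarith
        have t1 := hT1 n (by omega) ((L + n * (I1 - I2)) / 2 + ℓ / 2) (by
          rw [hL]; rw [hη] at hslack ⊢; linarith)
        have t2 := hT2 n (by omega) ((L - n * (I1 - I2)) / 2 + ℓ / 2) (by
          rw [hL]; rw [hη] at hslack ⊢; linarith)
        rw [← hr] at t1 t2
        have hΦ : stdNormCDF x ≤ ε - κ * (A / r) := by
          rw [hx]; linarith [hκd (A / r) hAr hAr1]
        have e1 : κ * (A / r) = B / r + 4 * S1 / η ^ 2 / r + 4 * S2 / η ^ 2 / r + 3 / r := by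
          rw [hA, hBtot]; field_simp
        linarith)
    refine le_trans ?_ key
    rw [← add_div, le_div_iff₀ hn0]
    have e0 : (I + s / r * q - (c1 + c2) * Real.log n / n) * n
        = n * I + s * r * q - (c1 + c2) * Real.log n := by
      rw [← hrr]; field_simp
    have e1 : s * r * x = s * r * q - s * A := by rw [hx]; field_simp
    have e2 : (L + n * (I1 - I2)) / 2 + (L - n * (I1 - I2)) / 2
        = n * I + s * r * q - s * A - ℓ / 2 := by
      rw [hL, e1]; ring
    have e3 : s * A + ℓ / 2 ≤ c1 * Real.log n := by
      have f1 : c1 * Real.log n = s * A * (Real.log n / Real.log 2) + ℓ := by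
        rw [hc1, hℓ, hlogb]; ring
      have f2 : 1 ≤ Real.log n / Real.log 2 := by rwa [one_le_div hl2]
      have f3 : 0 ≤ ℓ := by rw [hℓ, hlogb]; linarith
      have f4 : 0 < s * A := by positivity
      nlinarith
    have e4 : 0 ≤ c2 * Real.log n := mul_nonneg hc20 (by linarith)
    rw [e0]
    linarith

end
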